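/- arXiv:2301.05887 — 6 statements merged into one kernel-verified Lean document; each statement's English description precedes it below -/
import Mathlib

section
/- Suppose W is totally singular (W = rad(W)) of dimension s with defect d. Then the orthogonal group O(q,k) is isomorphic to the semidirect product GL_d(k) ⋉ Mat_{d×(s−d)}(k), where GL_d(k) acts on the additive group of d×(s−d) matrices over k by left multiplication. -/
section Defs

variable {k : Type*} [Field k] {W : Type*} [AddCommGroup W] [Module k W]

/-- The orthogonal group of a quadratic space `(W, q)`, as a subgroup of the group of
linear automorphisms of `W`. -/
def orthogonalGroup (q : W → k) : Subgroup (W ≃ₗ[k] W) where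
  carrier := {φ | ∀ w, q (φ w) = q w}
  one_mem' := fun _ => rfl
  mul_mem' := fun {a b} ha hb w => by
    have : (a * b) w = a (b w) := rfl
    rw [this, ha, hb]
  inv_mem' := fun {a} ha w => by
    have h := ha ((a⁻¹ : W ≃ₗ[k] W) w)
    have h2 : a ((a⁻¹ : W ≃ₗ[k] W) w) = w := a.apply_symm_apply w
    rw [h2] at h
    exact h.symm

variable (k) in
/-- The action of `GL_d(k)` on the additive group of `d × e` matrices by
left multiplication, as a homomorphism into the automorphism group. -/
def glLeftMulAction (d e : ℕ) :
    GL (Fin d) k →* MulAut (Multiplicative (Matrix (Fin d) (Fin e) k)) where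
  toFun M :=
    { toFun := fun A => Multiplicative.ofAdd ((M : Matrix (Fin d) (Fin d) k) * A.toAdd)
      invFun := fun A =>
        Multiplicative.ofAdd (((M⁻¹ : GL (Fin d) k) : Matrix (Fin d) (Fin d) k) * A.toAdd)
      left_inv := fun A => by
        have h : ((M⁻¹ : GL (Fin d) k) : Matrix (Fin d) (Fin d) k) *
            ((M : Matrix (Fin d) (Fin d) k) * A.toAdd) = A.toAdd := by
          rw [← Matrix.mul_assoc, Units.inv_mul, Matrix.one_mul]
        simp only [toAdd_ofAdd, h, ofAdd_toAdd]
      right_inv := fun A => by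
        have h : ((M : GL (Fin d) k) : Matrix (Fin d) (Fin d) k) *
            (((M⁻¹ : GL (Fin d) k) : Matrix (Fin d) (Fin d) k) * A.toAdd) = A.toAdd := by
          rw [← Matrix.mul_assoc, Units.mul_inv, Matrix.one_mul]
        simp only [toAdd_ofAdd, h, ofAdd_toAdd]
      map_mul' := fun A C => by
        simp [Matrix.mul_add, ofAdd_add] }
  map_one' := by
    ext A
    simp
  map_mul' := fun M N => by
    ext A
    simp [Matrix.mul_assoc]

end Defs

/-!
A totally singular form `q` is additive, so it factors as an injective map `r` on `W ⧸ Z`, where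
`Z` is the subspace of isotropic vectors. Split `W` as `(W ⧸ Z) × Z`: an automorphism preserves `q`
exactly when it preserves the first coordinate, i.e. when it is `(n, m) ↦ (n, g m + f n)` for an
automorphism `g` of `Z` and a linear map `f : W ⧸ Z → Z`. Composing two of these multiplies the
`g`s and twists the `f`s by postcomposition, which in bases is left multiplication.
-/

theorem exists_injective_eq_comp_fst {U V W A : Type*} [AddGroup U] [AddGroup V] [AddGroup W]
    [AddGroup A] (q : U →+ A) (e : U ≃+ V × W) (he : ∀ u, (e u).1 = 0 ↔ q u = 0) :
    ∃ r : V → A, Function.Injective r ∧ ∀ u, q u = r (e u).1 := by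
  have h_eq_iff (u u' : U) : q u = q u' ↔ (e u).1 = (e u').1 := by
    rw [← sub_eq_zero, ← map_sub, ← he, map_sub, Prod.fst_sub, sub_eq_zero]
  refine ⟨fun v => q (e.symm (v, 0)), fun v v' h => ?_, fun u => ?_⟩
  · simpa using (h_eq_iff _ _).mp h
  · exact (h_eq_iff _ _).mpr (by simp)

theorem exists_linearEquiv_prod_fst_eq_zero_iff {k W : Type*} [DivisionRing k]
    [AddCommGroup W] [Module k W] [FiniteDimensional k W] (Z : Submodule k W) {n d : ℕ}
    (hn : Module.finrank k (W ⧸ Z) = n) (hd : Module.finrank k Z = d) :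
    ∃ e : W ≃ₗ[k] (Fin n → k) × (Fin d → k), ∀ w, (e w).1 = 0 ↔ w ∈ Z := by
  obtain ⟨C, hC⟩ := Z.exists_isCompl
  let eC : C ≃ₗ[k] (Fin n → k) :=
    (Z.quotientEquivOfIsCompl C hC).symm ≪≫ₗ LinearEquiv.ofFinrankEq _ _ (by simp [hn])
  let eZ : Z ≃ₗ[k] (Fin d → k) := LinearEquiv.ofFinrankEq _ _ (by simp [hd])
  refine ⟨(Submodule.prodEquivOfIsCompl C Z hC.symm).symm ≪≫ₗ eC.prodCongr eZ, fun w => ?_⟩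
  simp

section SkewProd

variable (R N M : Type*) [Ring R] [AddCommGroup N] [Module R N] [AddCommGroup M] [Module R M]

/-- The action of `Aut(M)` on the additive group `Hom(N, M)` by postcomposition. -/
def postcompAction : (M ≃ₗ[R] M) →* MulAut (Multiplicative (N →ₗ[R] M)) :=
  (MulAutMultiplicative _).symm.toMonoidHom.comp (DistribMulAction.toAddAut (M ≃ₗ[R] M) _)

variable {R N M} in
theorem toAdd_postcompAction_apply (g : M ≃ₗ[R] M) (f : Multiplicative (N →ₗ[R] M)) :
    (postcompAction R N M g f).toAdd = g.toLinearMap ∘ₗ f.toAdd :=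
  rfl

/-- The action of `Hom(N, M) ⋊ Aut(M)` on `N × M` in which `(f, g)` is the block triangular
automorphism `(n, m) ↦ (n, g m + f n)`. -/
def skewProdHom :
    Multiplicative (N →ₗ[R] M) ⋊[postcompAction R N M] (M ≃ₗ[R] M) →*
      ((N × M) ≃ₗ[R] (N × M)) where
  toFun x := (LinearEquiv.refl R N).skewProd x.right x.left.toAdd
  map_one' := by ext <;> simp
  map_mul' x y := by
    ext <;> simp [toAdd_postcompAction_apply, add_comm, add_left_comm]

variable {R N M}

theorem skewProdHom_apply
    (x : Multiplicative (N →ₗ[R] M) ⋊[postcompAction R N M] (M ≃ₗ[R] M))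
    (v : N × M) : skewProdHom R N M x v = (v.1, x.right v.2 + x.left.toAdd v.1) :=
  rfl

theorem skewProdHom_injective : Function.Injective (skewProdHom R N M) := by
  intro x y h
  have h_apply (v) : skewProdHom R N M x v = skewProdHom R N M y v := by rw [h]
  simp only [skewProdHom_apply, Prod.mk.injEq, true_and] at h_apply
  apply SemidirectProduct.ext
  · exact Multiplicative.toAdd.injective (LinearMap.ext fun n => by simpa using h_apply (n, 0))
  · exact LinearEquiv.ext fun m => by simpa using h_apply (0, m)

theorem exists_skewProd_eq_of_fst_apply_eq (φ : (N × M) ≃ₗ[R] (N × M))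
    (hφ : ∀ v, (φ v).1 = v.1) :
    ∃ (g : M ≃ₗ[R] M) (f : N →ₗ[R] M), (LinearEquiv.refl R N).skewProd g f = φ := by
  have hφ_symm (v) : (φ.symm v).1 = v.1 := by simpa using (hφ (φ.symm v)).symm
  have h_inr (m) : (0, (φ (0, m)).2) = φ (0, m) := Prod.ext (hφ (0, m)).symm rfl
  have h_symm_inr (m) : (0, (φ.symm (0, m)).2) = φ.symm (0, m) := Prod.ext (hφ_symm (0, m)).symm rfl
  let restrict (ψ : (N × M) ≃ₗ[R] (N × M)) : M →ₗ[R] M :=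
    LinearMap.snd R N M ∘ₗ ψ ∘ₗ LinearMap.inr R N M
  let g : M ≃ₗ[R] M := LinearEquiv.ofLinearMap (restrict φ) (restrict φ.symm)
    (LinearMap.ext fun m => by simp [restrict, h_symm_inr])
    (LinearMap.ext fun m => by simp [restrict, h_inr])
  refine ⟨g, LinearMap.snd R N M ∘ₗ φ ∘ₗ LinearMap.inl R N M,
    LinearEquiv.ext fun v => Prod.ext (hφ v).symm ?_⟩
  have hv : φ v = φ (0, v.2) + φ (v.1, 0) := by simp [← map_add]
  simp [hv, g, restrict]

theorem mem_range_skewProdHom {φ : (N × M) ≃ₗ[R] (N × M)} :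
    φ ∈ (skewProdHom R N M).range ↔ ∀ v, (φ v).1 = v.1 := by
  constructor
  · rintro ⟨x, rfl⟩ v
    rfl
  · intro hφ
    obtain ⟨g, f, rfl⟩ := exists_skewProd_eq_of_fst_apply_eq φ hφ
    exact ⟨⟨.ofAdd f, g⟩, rfl⟩

end SkewProd

section OrthogonalGroup

variable {k : Type*} [Field k] {V W : Type*} [AddCommGroup V] [Module k V] [AddCommGroup W]
  [Module k W]

/-- Isometric spaces have isomorphic orthogonal groups, by conjugation. -/
def orthogonalGroupCongr {q : V → k} {q' : W → k} (e : V ≃ₗ[k] W) (he : ∀ v, q v = q' (e v)) :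
    orthogonalGroup q ≃* orthogonalGroup q' where
  toFun φ := ⟨e.symm ≪≫ₗ φ.1 ≪≫ₗ e, fun w => by
    simpa [he] using φ.2 (e.symm w)⟩
  invFun φ := ⟨e ≪≫ₗ φ.1 ≪≫ₗ e.symm, fun v => by
    simpa [he] using φ.2 (e v)⟩
  left_inv φ := by ext; simp
  right_inv φ := by ext; simp
  map_mul' φ ψ := by ext; simp

theorem range_skewProdHom_eq_orthogonalGroup {r : V → k} (hr : Function.Injective r) :
    (skewProdHom k V W).range = orthogonalGroup fun v => r v.1 := by
  ext φ
  rw [mem_range_skewProdHom]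
  exact forall_congr' fun v => hr.eq_iff.symm

/-- The orthogonal group of `V × W`, with a form that factors injectively through `V`, as a
semidirect product. If `r 0 = 0`, the factor `W` is the subspace of isotropic vectors. -/
noncomputable def orthogonalGroupFstMulEquiv {r : V → k} (hr : Function.Injective r) :
    orthogonalGroup (fun v : V × W => r v.1) ≃*
      Multiplicative (V →ₗ[k] W) ⋊[postcompAction k V W] (W ≃ₗ[k] W) :=
  (MulEquiv.subgroupCongr (range_skewProdHom_eq_orthogonalGroup hr).symm).trans
    (MonoidHom.ofInjective skewProdHom_injective).symm

variable (k) in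
/-- Passing to matrices in the standard bases identifies postcomposition with left
multiplication. -/
noncomputable def matrixSemidirectMulEquiv (d n : ℕ) :
    Multiplicative (Matrix (Fin d) (Fin n) k) ⋊[glLeftMulAction k d n] GL (Fin d) k ≃*
      Multiplicative ((Fin n → k) →ₗ[k] (Fin d → k))
        ⋊[postcompAction k (Fin n → k) (Fin d → k)]
          ((Fin d → k) ≃ₗ[k] (Fin d → k)) :=
  SemidirectProduct.congr (AddEquiv.toMultiplicative Matrix.toLin'.toAddEquiv)
    (Matrix.GeneralLinearGroup.toLin.trans (LinearMap.GeneralLinearGroup.generalLinearEquiv k _))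
    fun M => MulEquiv.ext fun A => Multiplicative.toAdd.injective (Matrix.toLin'_mul M.1 A.toAdd)

end OrthogonalGroup

theorem stmt_3_general
    {k : Type*} [Field k]
    {W : Type*} [AddCommGroup W] [Module k W] [FiniteDimensional k W]
    (q : W →+ k)
    (s d : ℕ) (hs : Module.finrank k W = s)
    (Z : Submodule k W) (hZ : ∀ w : W, w ∈ Z ↔ q w = 0)
    (hd : Module.finrank k Z = d) :
    Nonempty
      ((orthogonalGroup q) ≃*
        (Multiplicative (Matrix (Fin d) (Fin (s - d)) k)) ⋊[glLeftMulAction k d (s - d)]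
          GL (Fin d) k) := by
  have h_quotient : Module.finrank k (W ⧸ Z) = s - d := by rw [Z.finrank_quotient, hs, hd]
  obtain ⟨e, he⟩ := exists_linearEquiv_prod_fst_eq_zero_iff Z h_quotient hd
  obtain ⟨r, hr, hqr⟩ := exists_injective_eq_comp_fst q e.toAddEquiv fun w => (he w).trans (hZ w)
  exact ⟨(orthogonalGroupCongr e hqr).trans <| (orthogonalGroupFstMulEquiv hr).trans
    (matrixSemidirectMulEquiv k d (s - d)).symm⟩

/-- If `W` is totally singular of dimension `s` with defect `d`, then
`O(q,k) ≅ GL_d(k) ⋉ Mat_{d×(s-d)}(k)`, the action being left multiplication. -/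
theorem stmt_3
    {k : Type*} [Field k] [CharP k 2]
    {W : Type*} [AddCommGroup W] [Module k W] [FiniteDimensional k W]
    (q : W → k) (hq : ∀ (a : k) (w : W), q (a • w) = a ^ 2 * q w)
    (B : LinearMap.BilinForm k W)
    (hB : ∀ w w' : W, B w w' = q (w + w') + q w + q w')
    (htotsing : ∀ w w' : W, B w w' = 0)
    (s d : ℕ) (hs : Module.finrank k W = s)
    (Z : Submodule k W) (hZ : ∀ w : W, w ∈ Z ↔ q w = 0)
    (hd : Module.finrank k Z = d) :
    Nonempty
      ((orthogonalGroup q) ≃*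
        (Multiplicative (Matrix (Fin d) (Fin (s - d)) k)) ⋊[glLeftMulAction k d (s - d)]
          GL (Fin d) k) := by
  have hadd (w w' : W) : q (w + w') = q w + q w' :=
    CharTwo.add_eq_zero.mp (by rw [← add_assoc, ← hB, htotsing])
  exact stmt_3_general (AddMonoidHom.mk' q hadd) s d hs Z hZ hd
end

section
/- Let W be nonsingular of dimension 2r and τ = τ_U a diagonal involution of length l ≤ r with inducing set U. Let V = {v_1,…,v_l} span a totally singular nonsingular completion of span(U) (B(u_i,v_j) = δ_{ij}) and let X be a basis of the orthogonal complement (span(U ∪ V))^⊥, so W = span(U) ⊕ span(X) ⊕ span(V). Then every φ ∈ O(q,k)^{I_τ} has, relative to this decomposition, the block upper-triangular form [[φ_U, φ_U C, φ_U A],[0, φ_X, φ_X D],[0, 0, φ_U^*]], where φ_U ∈ O(q_U,k), φ_X : span(X) → span(X) preserves the bilinear form B restricted to span(X) (i.e. φ_X ∈ Sp(B_X,k)), and φ_U^* is the unique linear automorphism of span(V) with B(φ_U(u), φ_U^*(v)) = B(u,v) for all u ∈ span(U), v ∈ span(V). -/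
/-!
Put `f i = q(uᵢ)⁻¹ B(uᵢ, ·)`. As the `uᵢ` are mutually orthogonal and `B` is alternating, the
product of the transvections is `τ = 1 + ∑ f i ⊗ uᵢ`, and the dual vectors `vᵢ` show that the range
of `τ - 1` is all of `U = span {uᵢ}`. Hence an isometry commuting with `τ` stabilizes `U`, and with
it the orthogonal `U^⊥ = U ⊕ X`; this is the triangular shape. The block `φ_X` is the map induced
on `U^⊥ / U`, an isometry because `U` is orthogonal to `U^⊥`; the block `φ_U^*` is the map induced
on `W / U^⊥`, which `B` pairs with `U`.
-/

section Transvections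

variable {R M ι : Type*} [CommRing R] [AddCommGroup M] [Module R M]

theorem prod_map_transvection_apply {f : ι → Module.Dual R M} {u : ι → M}
    (hfu : ∀ i j, f i (u j) = 0) {t : ι → M ≃ₗ[R] M} (ht : ∀ i z, t i z = z + f i z • u i)
    (L : List ι) (z : M) :
    (L.map t).prod z = z + (L.map fun i => f i z • u i).sum := by
  induction L with
  | nil => simp
  | cons i L ih =>
    have hker : f i (L.map fun j => f j z • u j).sum = 0 := by
      rw [map_list_sum, List.map_map]
      refine List.sum_eq_zero fun a ha => ?_
      obtain ⟨j, -, rfl⟩ := List.mem_map.1 ha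
      simp [hfu]
    rw [List.map_cons, List.prod_cons, LinearEquiv.mul_apply, ih, ht, map_add, hker, add_zero,
      List.map_cons, List.sum_cons, add_assoc, add_comm (List.sum _)]

theorem prod_reverse_ofFn_transvection_apply {l : ℕ} {f : Fin l → Module.Dual R M}
    {u : Fin l → M} (hfu : ∀ i j, f i (u j) = 0) {t : Fin l → M ≃ₗ[R] M}
    (ht : ∀ i z, t i z = z + f i z • u i) (z : M) :
    (List.ofFn t).reverse.prod z = z + ∑ i, f i z • u i := by
  rw [List.ofFn_eq_map, ← List.map_reverse, prod_map_transvection_apply hfu ht, List.map_reverse,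
    List.sum_reverse, ← List.ofFn_eq_map, List.sum_ofFn]

theorem range_sum_smulRight_eq_span [Fintype ι] [DecidableEq ι] {f : ι → Module.Dual R M}
    {u v : ι → M} {c : ι → R} (hc : ∀ i, IsUnit (c i))
    (hfv : ∀ i j, f i (v j) = if i = j then c i else 0) :
    LinearMap.range (∑ i, (f i).smulRight (u i)) = Submodule.span R (Set.range u) := by
  apply le_antisymm
  · rintro _ ⟨z, rfl⟩
    simp only [LinearMap.sum_apply, LinearMap.smulRight_apply]
    exact sum_mem fun i _ => Submodule.smul_mem _ _ (Submodule.subset_span ⟨i, rfl⟩)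
  · rw [Submodule.span_le]
    rintro _ ⟨j, rfl⟩
    refine ⟨Ring.inverse (c j) • v j, ?_⟩
    simp [hfv, smul_smul, Ring.inverse_mul_cancel _ (hc j)]

theorem map_range_eq_of_comp_comm (g : M ≃ₗ[R] M) {N : M →ₗ[R] M}
    (hgN : ∀ z, N (g z) = g (N z)) :
    (LinearMap.range N).map (g : M →ₗ[R] M) = LinearMap.range N := by
  have hcomp : (g : M →ₗ[R] M) ∘ₗ N = N ∘ₗ g := LinearMap.ext fun z => (hgN z).symm
  rw [← LinearMap.range_comp, hcomp, LinearMap.range_comp_of_range_eq_top _ g.range]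

theorem map_span_eq_of_commute_prod_transvections {l : ℕ} {f : Fin l → Module.Dual R M}
    {u v : Fin l → M} {c : Fin l → R} (hc : ∀ i, IsUnit (c i)) (hfu : ∀ i j, f i (u j) = 0)
    (hfv : ∀ i j, f i (v j) = if i = j then c i else 0) {t : Fin l → M ≃ₗ[R] M}
    (ht : ∀ i z, t i z = z + f i z • u i) {g : M ≃ₗ[R] M}
    (hg : Commute (List.ofFn t).reverse.prod g) :
    (Submodule.span R (Set.range u)).map (g : M →ₗ[R] M) = Submodule.span R (Set.range u) := by
  rw [← range_sum_smulRight_eq_span hc hfv]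
  refine map_range_eq_of_comp_comm g fun z => ?_
  have hz := LinearEquiv.congr_fun hg.eq z
  rw [LinearEquiv.mul_apply, LinearEquiv.mul_apply, prod_reverse_ofFn_transvection_apply hfu ht,
    prod_reverse_ofFn_transvection_apply hfu ht, map_add, add_right_inj] at hz
  simpa only [LinearMap.sum_apply, LinearMap.smulRight_apply] using hz

end Transvections

section DualFamilies

variable {R M ι : Type*} [CommRing R] [AddCommGroup M] [Module R M]

theorem disjoint_span_of_dual [DecidableEq ι] {f : ι → Module.Dual R M} {b : ι → M}
    (hfb : ∀ i j, f i (b j) = if i = j then 1 else 0) {N : Submodule R M}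
    (hN : ∀ i, ∀ n ∈ N, f i n = 0) : Disjoint N (Submodule.span R (Set.range b)) := by
  rw [Submodule.disjoint_def]
  intro n hn hnb
  obtain ⟨c, rfl⟩ := Finsupp.mem_span_range_iff_exists_finsupp.1 hnb
  have hc : c = 0 := by
    ext i
    simpa [hfb, map_finsuppSum] using hN i _ hn
  rw [hc, Finsupp.sum_zero_index]

theorem map_eq_zero_of_mem_span {f : Module.Dual R M} {b : ι → M} (hfb : ∀ i, f (b i) = 0)
    {w : M} (hw : w ∈ Submodule.span R (Set.range b)) : f w = 0 :=
  LinearMap.eqOn_span (g := 0) (by rintro _ ⟨i, rfl⟩; exact hfb i) hw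

theorem mem_orthogonal_span_range {B : LinearMap.BilinForm R M} {b : ι → M} {w : M} :
    w ∈ B.orthogonal (Submodule.span R (Set.range b)) ↔ ∀ i, B (b i) w = 0 :=
  ⟨fun hw i => hw _ (Submodule.subset_span ⟨i, rfl⟩),
    fun hw _ ha => map_eq_zero_of_mem_span (f := B.flip w) hw ha⟩

end DualFamilies

section Isometries

variable {R M : Type*} [CommRing R] [AddCommGroup M] [Module R M]
  {B : LinearMap.BilinForm R M} {U X V : Submodule R M}

theorem map_orthogonal_eq_of_map_eq {g : M ≃ₗ[R] M} (hg : ∀ w w', B (g w) (g w') = B w w')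
    (hU : U.map (g : M →ₗ[R] M) = U) :
    (B.orthogonal U).map (g : M →ₗ[R] M) = B.orthogonal U := by
  ext w
  rw [Submodule.mem_map_equiv]
  nth_rw 2 [← hU]
  constructor
  · rintro hw _ ⟨a, ha, rfl⟩
    rw [← g.apply_symm_apply w]
    exact (hg a (g.symm w)).trans (hw a ha)
  · intro hw a ha
    rw [← hg, g.apply_symm_apply]
    exact hw (g a) ⟨a, ha, rfl⟩

/-- A splitting `M = U ⊕ X ⊕ V` of the flag `U ≤ U^⊥ ≤ M` of a totally isotropic submodule `U`:
`X` is a complement of `U` in `U^⊥` and `V` is a complement of `U^⊥` in `M`. The isotropy of `U` is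
contained in `sup_eq`. -/
structure IsIsotropicFlagSplitting (B : LinearMap.BilinForm R M) (U X V : Submodule R M) :
    Prop where
  disjoint : Disjoint U X
  sup_eq : U ⊔ X = B.orthogonal U
  isCompl : IsCompl (B.orthogonal U) V

namespace IsIsotropicFlagSplitting

theorem of_dual_families {ι κ : Type*} [DecidableEq ι] {u v : ι → M} {x : κ → M}
    (hB : B.IsRefl) (huu : ∀ i j, B (u i) (u j) = 0)
    (huv : ∀ i j, B (u i) (v j) = if i = j then 1 else 0)
    (hux : ∀ i j, B (u i) (x j) = 0) (hvx : ∀ i j, B (v i) (x j) = 0)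
    (hspan : Submodule.span R (Set.range u ∪ Set.range v ∪ Set.range x) = ⊤) :
    IsIsotropicFlagSplitting B (Submodule.span R (Set.range u)) (Submodule.span R (Set.range x))
      (Submodule.span R (Set.range v)) := by
  set U := Submodule.span R (Set.range u)
  set V := Submodule.span R (Set.range v)
  set X := Submodule.span R (Set.range x)
  have hle : U ⊔ X ≤ B.orthogonal U := by
    rw [sup_le_iff, Submodule.span_le, Submodule.span_le]
    constructor <;> rintro _ ⟨j, rfl⟩
    · exact mem_orthogonal_span_range.2 fun i => huu i j
    · exact mem_orthogonal_span_range.2 fun i => hux i j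
  have htop : U ⊔ X ⊔ V = ⊤ := by
    rw [← hspan, Submodule.span_union, Submodule.span_union, sup_right_comm]
  have hdisj : Disjoint (B.orthogonal U) V :=
    disjoint_span_of_dual huv fun i _ hn => mem_orthogonal_span_range.1 hn i
  refine ⟨?_, ?_, hdisj, codisjoint_iff_le_sup.2 (htop ▸ sup_le_sup_right hle V)⟩
  · symm
    refine disjoint_span_of_dual (f := fun i => B.flip (v i)) (fun i j => ?_) fun i n hn => ?_
    · rw [LinearMap.BilinForm.flip_apply, huv, if_congr eq_comm rfl rfl]
    · exact hB _ _ (map_eq_zero_of_mem_span (hvx i) hn)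
  · exact eq_of_le_of_inf_le_of_le_sup hle (hdisj.le_bot.trans bot_le) (htop ▸ le_top)

theorem isCompl_left (h : IsIsotropicFlagSplitting B U X V) : IsCompl U (X ⊔ V) :=
  h.disjoint.isCompl_sup_right_of_isCompl_sup_left (h.sup_eq ▸ h.isCompl)

theorem isCompl_middle (h : IsIsotropicFlagSplitting B U X V) : IsCompl X (U ⊔ V) :=
  h.disjoint.symm.isCompl_sup_right_of_isCompl_sup_left (sup_comm U X ▸ h.sup_eq ▸ h.isCompl)

/-- The projection of `M = U ⊕ X ⊕ V` onto `U`. -/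
noncomputable def projU (h : IsIsotropicFlagSplitting B U X V) : M →ₗ[R] U :=
  U.projectionOnto (X ⊔ V) h.isCompl_left

/-- The projection of `M = U ⊕ X ⊕ V` onto `X`. -/
noncomputable def projX (h : IsIsotropicFlagSplitting B U X V) : M →ₗ[R] X :=
  X.projectionOnto (U ⊔ V) h.isCompl_middle

/-- The projection of `M = U ⊕ X ⊕ V` onto `V`; its kernel is `U^⊥ = U ⊕ X`. -/
noncomputable def projV (h : IsIsotropicFlagSplitting B U X V) : M →ₗ[R] V :=
  V.projectionOnto (B.orthogonal U) h.isCompl.symm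

theorem projX_of_mem_left (h : IsIsotropicFlagSplitting B U X V) {a : M} (ha : a ∈ U) :
    h.projX a = 0 :=
  (Submodule.projectionOnto_apply_eq_zero_iff h.isCompl_middle).2 (Submodule.mem_sup_left ha)

theorem projX_coe (h : IsIsotropicFlagSplitting B U X V) (z : X) : h.projX z = z :=
  Submodule.projectionOnto_apply_left h.isCompl_middle z

theorem projV_eq_zero_iff (h : IsIsotropicFlagSplitting B U X V) {w : M} :
    h.projV w = 0 ↔ w ∈ B.orthogonal U :=
  Submodule.projectionOnto_apply_eq_zero_iff h.isCompl.symm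

theorem projV_coe (h : IsIsotropicFlagSplitting B U X V) (y : V) : h.projV y = y :=
  Submodule.projectionOnto_apply_left h.isCompl.symm y

theorem projV_add_projX_add_projU (h : IsIsotropicFlagSplitting B U X V) (w : M) :
    (h.projV w : M) + h.projX w + h.projU w = w := by
  have hw : w ∈ U ⊔ X ⊔ V := by rw [h.sup_eq, h.isCompl.sup_eq_top]; trivial
  obtain ⟨b, hb, y, hy, rfl⟩ := Submodule.mem_sup.1 hw
  obtain ⟨a, ha, z, hz, rfl⟩ := Submodule.mem_sup.1 hb
  have hprojU : h.projU (a + z + y) = a := by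
    have hzy : h.projU (z + y) = 0 := Submodule.projectionOnto_apply_of_mem_right h.isCompl_left
      (Submodule.add_mem_sup hz hy)
    have haa := Submodule.projectionOnto_apply_left h.isCompl_left ⟨a, ha⟩
    rw [add_assoc, map_add, hzy, add_zero]
    exact congrArg Subtype.val haa
  have hprojX : h.projX (a + z + y) = z := by
    have hay : h.projX (a + y) = 0 := Submodule.projectionOnto_apply_of_mem_right h.isCompl_middle
      (Submodule.add_mem_sup ha hy)
    rw [add_right_comm, map_add, hay, zero_add]
    exact congrArg Subtype.val (h.projX_coe ⟨z, hz⟩)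
  have hprojV : h.projV (a + z + y) = y := by
    rw [map_add, h.projV_eq_zero_iff.2 (h.sup_eq ▸ hb), zero_add]
    exact congrArg Subtype.val (h.projV_coe ⟨y, hy⟩)
  rw [hprojU, hprojX, hprojV, add_comm, add_comm y, ← add_assoc]

theorem projX_add_projU (h : IsIsotropicFlagSplitting B U X V) {w : M}
    (hw : w ∈ B.orthogonal U) : (h.projX w : M) + h.projU w = w := by
  simpa [h.projV_eq_zero_iff.2 hw] using h.projV_add_projX_add_projU w

theorem bilin_projX (h : IsIsotropicFlagSplitting B U X V) (hB : B.IsRefl) {w w' : M}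
    (hw : w ∈ B.orthogonal U) (hw' : w' ∈ B.orthogonal U) :
    B (h.projX w) (h.projX w') = B w w' := by
  have hX : (h.projX w : M) ∈ B.orthogonal U := h.sup_eq ▸ Submodule.mem_sup_right (h.projX w).2
  calc B (h.projX w) (h.projX w')
      = B (h.projX w) (h.projX w') + B (h.projX w) (h.projU w') := by
        rw [hB _ _ (hX _ (h.projU w').2), add_zero]
    _ = B (h.projX w) w' := by rw [← map_add, h.projX_add_projU hw']
    _ = B (h.projX w) w' + B (h.projU w) w' := by rw [hw' _ (h.projU w).2, add_zero]
    _ = B w w' := by rw [← LinearMap.add_apply, ← map_add, h.projX_add_projU hw]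

theorem sub_projV_mem_orthogonal (h : IsIsotropicFlagSplitting B U X V) (w : M) :
    w - h.projV w ∈ B.orthogonal U := by
  rw [← h.projV_eq_zero_iff, map_sub, h.projV_coe, sub_self]

theorem bilin_projV (h : IsIsotropicFlagSplitting B U X V) {a : M} (ha : a ∈ U) (w : M) :
    B a (h.projV w) = B a w := by
  have hperp : B a (w - h.projV w) = 0 := h.sub_projV_mem_orthogonal w a ha
  rw [map_sub, sub_eq_zero] at hperp
  exact hperp.symm

theorem projV_apply_projV (h : IsIsotropicFlagSplitting B U X V) {g : M ≃ₗ[R] M}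
    (hgU : (B.orthogonal U).map (g : M →ₗ[R] M) = B.orthogonal U) (w : M) :
    h.projV (g (h.projV w)) = h.projV (g w) := by
  have hmem : g (w - h.projV w) ∈ B.orthogonal U :=
    hgU.le <| Submodule.mem_map_of_mem (h.sub_projV_mem_orthogonal w)
  rw [← h.projV_eq_zero_iff, map_sub, map_sub, sub_eq_zero] at hmem
  exact hmem.symm

theorem projX_apply_projX (h : IsIsotropicFlagSplitting B U X V) {g : M ≃ₗ[R] M}
    (hgU : U.map (g : M →ₗ[R] M) = U) {w : M} (hw : w ∈ B.orthogonal U) :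
    h.projX (g (h.projX w)) = h.projX (g w) := by
  have hmem : g (h.projU w) ∈ U := hgU.le <| Submodule.mem_map_of_mem (h.projU w).2
  nth_rw 2 [← h.projX_add_projU hw]
  rw [map_add, map_add, h.projX_of_mem_left hmem, add_zero]

/-- The diagonal block on `X` of an endomorphism of `M = U ⊕ X ⊕ V`. -/
noncomputable def blockX (h : IsIsotropicFlagSplitting B U X V) (g : M →ₗ[R] M) : X →ₗ[R] X :=
  h.projX ∘ₗ g ∘ₗ X.subtype

/-- The diagonal block on `V` of an automorphism of `M = U ⊕ X ⊕ V` stabilizing `U^⊥`; its inverse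
is the block of the inverse automorphism. -/
noncomputable def blockV (h : IsIsotropicFlagSplitting B U X V) (g : M ≃ₗ[R] M)
    (hgU : (B.orthogonal U).map (g : M →ₗ[R] M) = B.orthogonal U) : V ≃ₗ[R] V :=
  LinearEquiv.ofLinearMap (h.projV ∘ₗ (g : M →ₗ[R] M) ∘ₗ V.subtype)
    (h.projV ∘ₗ (g.symm : M →ₗ[R] M) ∘ₗ V.subtype)
    (LinearMap.ext fun y => by simp [h.projV_apply_projV hgU, h.projV_coe])
    (LinearMap.ext fun y => by
      simp [h.projV_apply_projV ((Submodule.map_symm_eq_iff g).2 hgU), h.projV_coe])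

/-- The `U`-component of an automorphism of `M = U ⊕ X ⊕ V` stabilizing `U`, with the diagonal
block on `U` factored out on the left: `g w` has `U`-component `g (rowU w)`. -/
noncomputable def rowU (h : IsIsotropicFlagSplitting B U X V) (g : M ≃ₗ[R] M)
    (hgU : U.map (g : M →ₗ[R] M) = U) : M →ₗ[R] U :=
  (g.ofSubmodules U U hgU).symm ∘ₗ h.projU ∘ₗ (g : M →ₗ[R] M)

theorem apply_rowU (h : IsIsotropicFlagSplitting B U X V) {g : M ≃ₗ[R] M}
    (hgU : U.map (g : M →ₗ[R] M) = U) (w : M) : g (h.rowU g hgU w) = h.projU (g w) := by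
  simp [rowU]

theorem blockX_projX_symm (h : IsIsotropicFlagSplitting B U X V) {g : M ≃ₗ[R] M}
    (hgU : U.map (g : M →ₗ[R] M) = U)
    (hgO : (B.orthogonal U).map (g : M →ₗ[R] M) = B.orthogonal U) (z : X) :
    h.blockX g (h.projX (g.symm z)) = z := by
  have hz : g.symm z ∈ B.orthogonal U := by
    rw [← Submodule.mem_map_equiv, hgO, ← h.sup_eq]
    exact Submodule.mem_sup_right z.2
  refine (h.projX_apply_projX hgU hz).trans ?_
  rw [g.apply_symm_apply, h.projX_coe]

theorem exists_blockTriangular (h : IsIsotropicFlagSplitting B U X V) (hB : B.IsRefl)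
    {g : M ≃ₗ[R] M} (hg : ∀ w w', B (g w) (g w') = B w w')
    (hgU : U.map (g : M →ₗ[R] M) = U) :
    ∃ (gX : X →ₗ[R] X) (C : X →ₗ[R] U) (ψ : V ≃ₗ[R] V) (D : V →ₗ[R] X) (A : V →ₗ[R] U),
      (∀ z : X, g z = gX z + g (C z)) ∧
      (∀ y : V, g y = ψ y + gX (D y) + g (A y)) ∧
      (∀ z z' : X, B (gX z) (gX z') = B z z') ∧
      ∀ (a : U) (y : V), B (g a) (ψ y) = B a y := by
  have hgO := map_orthogonal_eq_of_map_eq hg hgU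
  have hX : ∀ z : X, g z ∈ B.orthogonal U := fun z =>
    hgO.le <| Submodule.mem_map_of_mem (h.sup_eq ▸ Submodule.mem_sup_right z.2)
  refine ⟨h.blockX g, h.rowU g hgU ∘ₗ X.subtype, h.blockV g hgO,
    h.projX ∘ₗ (g.symm : M →ₗ[R] M) ∘ₗ X.subtype ∘ₗ h.projX ∘ₗ (g : M →ₗ[R] M) ∘ₗ V.subtype,
    h.rowU g hgU ∘ₗ V.subtype, fun z => ?_, fun y => ?_, fun z z' => ?_, fun a y => ?_⟩
  · exact (h.projX_add_projU (hX z)).symm.trans (by rw [← h.apply_rowU hgU]; rfl)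
  · have hD := h.blockX_projX_symm hgU hgO (h.projX (g y))
    refine (h.projV_add_projX_add_projU (g y)).symm.trans ?_
    rw [← h.apply_rowU hgU]
    nth_rw 1 [← hD]
    rfl
  · exact (h.bilin_projX hB (hX z) (hX z')).trans (hg z z')
  · have hga : g a ∈ U := hgU.le <| Submodule.mem_map_of_mem a.2
    exact (h.bilin_projV hga (g y)).trans (hg a y)

end IsIsotropicFlagSplitting

end Isometries

section CharTwo

variable {R M : Type*} [CommRing R] [AddCommGroup M] [Module R M] {q : M → R}
  {B : LinearMap.BilinForm R M}

theorem isAlt_of_polar_charTwo [CharP R 2] (hq : ∀ (a : R) (w : M), q (a • w) = a ^ 2 * q w)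
    (hB : ∀ w w', B w w' = q (w + w') + q w + q w') : B.IsAlt := fun w => by
  have htwo : q (w + w) = 0 := by
    rw [← two_smul R w, hq, CharTwo.two_eq_zero, zero_pow two_ne_zero, zero_mul]
  rw [hB, htwo, zero_add, CharTwo.add_self_eq_zero]

theorem bilin_apply_apply_of_polar {F : Type*} [FunLike F M M] [AddMonoidHomClass F M M] {g : F}
    (hB : ∀ w w', B w w' = q (w + w') + q w + q w') (hg : ∀ w, q (g w) = q w) (w w' : M) :
    B (g w) (g w') = B w w' := by
  rw [hB, hB, ← map_add, hg, hg, hg]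

end CharTwo

theorem stmt_14_general {R M κ : Type*} [CommRing R] [CharP R 2] [AddCommGroup M] [Module R M]
    {q : M → R} (hq : ∀ (a : R) (w : M), q (a • w) = a ^ 2 * q w)
    {B : LinearMap.BilinForm R M} (hB : ∀ w w', B w w' = q (w + w') + q w + q w')
    {l : ℕ} {u v : Fin l → M} {x : κ → M} (hu : ∀ i, IsUnit (q (u i)))
    (huo : ∀ i j, i ≠ j → B (u i) (u j) = 0)
    (huv : ∀ i j, B (u i) (v j) = if i = j then 1 else 0)
    (hux : ∀ i j, B (u i) (x j) = 0) (hvx : ∀ i j, B (v i) (x j) = 0)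
    (hspan : Submodule.span R (Set.range u ∪ Set.range v ∪ Set.range x) = ⊤)
    {SU SV SX : Submodule R M} (hSU : SU = Submodule.span R (Set.range u))
    (hSV : SV = Submodule.span R (Set.range v)) (hSX : SX = Submodule.span R (Set.range x))
    {τs : Fin l → M ≃ₗ[R] M}
    (hτs : ∀ i z, τs i z = z + (Ring.inverse (q (u i)) * B (u i) z) • u i)
    {φ : M ≃ₗ[R] M} (hφ : ∀ w, q (φ w) = q w)
    (hcomm : Commute (List.ofFn τs).reverse.prod φ) :
    ∃ (φX : SX →ₗ[R] SX) (C : SX →ₗ[R] SU) (ψ : SV ≃ₗ[R] SV)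
      (D : SV →ₗ[R] SX) (A : SV →ₗ[R] SU),
      (∀ a : SU, φ a ∈ SU) ∧
      (∀ a : SU, q (φ a) = q a) ∧
      (∀ z : SX, φ z = φX z + φ (C z)) ∧
      (∀ y : SV, φ y = ψ y + φX (D y) + φ (A y)) ∧
      (∀ z z' : SX, B (φX z) (φX z') = B z z') ∧
      ∀ (a : SU) (y : SV), B (φ a) (ψ y) = B a y := by
  subst hSU hSV hSX
  have halt : B.IsAlt := isAlt_of_polar_charTwo hq hB
  have huu : ∀ i j, B (u i) (u j) = 0 := fun i j => by
    rcases eq_or_ne i j with rfl | hij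
    exacts [halt (u i), huo i j hij]
  have hφU := map_span_eq_of_commute_prod_transvections
    (f := fun i => Ring.inverse (q (u i)) • B (u i)) (u := u) (v := v)
    (fun i => (hu i).ringInverse) (fun i j => by simp [huu]) (fun i j => by simp [huv]) hτs hcomm
  have hsplit := IsIsotropicFlagSplitting.of_dual_families halt.isRefl huu huv hux hvx hspan
  obtain ⟨φX, C, ψ, D, A, hblocks⟩ :=
    hsplit.exists_blockTriangular halt.isRefl (bilin_apply_apply_of_polar hB hφ) hφU
  exact ⟨φX, C, ψ, D, A, fun a => hφU.le (Submodule.mem_map_of_mem a.2), fun a => hφ a, hblocks⟩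

/-- On a nonsingular space of dimension `2r`, every element of
`O(q,k)^{I_τ}` for a diagonal involution `τ = τ_U` of length `l ≤ r` is block
upper-triangular relative to `W = span U ⊕ span X ⊕ span V`, with `φ_U ∈ O(q_U,k)`,
`φ_X ∈ Sp(B_X,k)` and `φ_U^*` determined by `B(φ_U(u), φ_U^*(v)) = B(u,v)`. -/
theorem stmt_14
    {k : Type*} [Field k] [CharP k 2]
    {W : Type*} [AddCommGroup W] [Module k W] [FiniteDimensional k W]
    (q : W → k) (hq : ∀ (a : k) (w : W), q (a • w) = a ^ 2 * q w)
    (B : LinearMap.BilinForm k W)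
    (hB : ∀ w w' : W, B w w' = q (w + w') + q w + q w')
    (hnd : ∀ w : W, (∀ w' : W, B w w' = 0) → w = 0)
    (r l : ℕ) (hlr : l ≤ r) (hdim : Module.finrank k W = 2 * r)
    (u v : Fin l → W) (x : Fin (2 * r - 2 * l) → W)
    (hu0 : ∀ i, q (u i) ≠ 0)
    (huo : ∀ i j, i ≠ j → B (u i) (u j) = 0)
    (hvo : ∀ i j, B (v i) (v j) = 0)
    (huv : ∀ i j, B (u i) (v j) = if i = j then 1 else 0)
    (hux : ∀ i j, B (u i) (x j) = 0)
    (hvx : ∀ i j, B (v i) (x j) = 0)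
    (hxli : LinearIndependent k x)
    (hspan : Submodule.span k (Set.range u ∪ Set.range v ∪ Set.range x) = ⊤)
    (SU SV SX : Submodule k W)
    (hSU : SU = Submodule.span k (Set.range u))
    (hSV : SV = Submodule.span k (Set.range v))
    (hSX : SX = Submodule.span k (Set.range x))
    (hudim : Module.finrank k SU = l)
    (τs : Fin l → (W ≃ₗ[k] W))
    (hτs : ∀ i z, τs i z = z + ((q (u i))⁻¹ * B (u i) z) • u i)
    (τ : W ≃ₗ[k] W)
    (hτ : τ = (List.ofFn τs).reverse.prod)
    (hτ2 : τ * τ = 1) (hτ1 : τ ≠ 1)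
    (hτred : ∀ m < l, ¬ ∃ (w : Fin m → W) (ρs : Fin m → (W ≃ₗ[k] W)),
        (∀ i, q (w i) ≠ 0 ∧ ∀ z, ρs i z = z + ((q (w i))⁻¹ * B (w i) z) • w i) ∧
        τ = (List.ofFn ρs).reverse.prod)
    (φ : W ≃ₗ[k] W) (hφO : ∀ w, q (φ w) = q w) (hfix : τ * φ * τ⁻¹ = φ) :
    ∃ (φX : SX →ₗ[k] SX) (C : SX →ₗ[k] SU) (ψ : SV ≃ₗ[k] SV)
      (D : SV →ₗ[k] SX) (A : SV →ₗ[k] SU),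
      (∀ a : SU, φ (a : W) ∈ SU) ∧
      (∀ a : SU, q (φ (a : W)) = q (a : W)) ∧
      (∀ z : SX, φ (z : W) = (φX z : W) + φ ((C z : W))) ∧
      (∀ y : SV, φ (y : W) = (ψ y : W) + (φX (D y) : W) + φ ((A y : W))) ∧
      (∀ z z' : SX, B ((φX z : W)) ((φX z' : W)) = B (z : W) (z' : W)) ∧
      (∀ (a : SU) (y : SV), B (φ (a : W)) ((ψ y : W)) = B (a : W) (y : W)) := by
  subst hτ
  exact stmt_14_general hq hB (fun i => (hu0 i).isUnit) huo huv hux hvx hspan hSU hSV hSX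
    (by simpa only [Ring.inverse_eq_inv] using hτs) hφO (mul_inv_eq_iff_eq_mul.1 hfix)
end

section
/- In the setting of the previous block decomposition (W nonsingular of dimension 2r, τ = τ_U a diagonal involution, W = span(U) ⊕ span(X) ⊕ span(V)), let φ ∈ O(q,k)^{I_τ} have blocks C : span(X) → span(U) and D : span(V) → span(X) as in its block upper-triangular form [[φ_U, φ_U C, φ_U A],[0, φ_X, φ_X D],[0,0, φ_U^*]]. Then B(v, Cx) = B(Dv, x) for all v ∈ span(V) and x ∈ span(X); in particular D is completely determined by C. -/
/-!
For `z ∈ X` and `y ∈ V` the block form says that `φ (z - C z) = φX z` lies in `X` and that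
`φ (y - A y - (D y - C (D y))) = ψ y` lies in `V`. These two values are orthogonal and `φ` is an
isometry, so the two arguments are orthogonal as well. In the expansion of
`B (y - A y - (D y - C (D y))) (z - C z)` only `-B y (C z)` and `-B (D y) z` can be nonzero,
because `U` is orthogonal to itself and to `X`, and `V` is orthogonal to `X`.
-/

section

variable {R W : Type*} [CommRing R] [AddCommGroup W] [Module R W] {B : LinearMap.BilinForm R W}

theorem span_range_le_orthogonal_span_range {ι κ : Type*} {f : ι → W} {g : κ → W}
    (h : ∀ i j, B (f i) (g j) = 0) :
    Submodule.span R (Set.range g) ≤ B.orthogonal (Submodule.span R (Set.range f)) := by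
  rw [Submodule.span_le, Set.range_subset_iff]
  intro j
  have hker : Submodule.span R (Set.range f) ≤ LinearMap.ker (B.flip (g j)) :=
    Submodule.span_le.mpr (Set.range_subset_iff.mpr fun i => h i j)
  exact fun _ ha => hker ha

theorem span_range_le_orthogonal_self_of_isAlt (hB : B.IsAlt) {ι : Type*} {f : ι → W}
    (hf : B.iIsOrtho f) :
    Submodule.span R (Set.range f) ≤ B.orthogonal (Submodule.span R (Set.range f)) := by
  refine span_range_le_orthogonal_span_range fun i j => ?_
  rcases eq_or_ne i j with rfl | hij
  · exact hB.self_eq_zero (f i)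
  · exact hf hij

theorem isAlt_of_polar_of_charTwo [CharP R 2] {q : W → R}
    (hB : ∀ a b, B a b = QuadraticMap.polar q a b) : B.IsAlt := by
  have hself (a : W) : B a a = q 0 := by
    have hadd : a + a = 0 := by rw [← two_smul R a, CharTwo.two_eq_zero, zero_smul]
    rw [hB, QuadraticMap.polar, hadd, sub_sub, CharTwo.add_self_eq_zero, sub_zero]
  intro a
  calc
    B a a = B 0 0 := (hself a).trans (hself 0).symm
    _ = 0 := LinearMap.BilinForm.zero_left 0

theorem isOrthogonal_of_polar {q : W → R} (hB : ∀ a b, B a b = QuadraticMap.polar q a b)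
    {F : Type*} [FunLike F W W] [AddHomClass F W W] {φ : F} (hφ : ∀ a, q (φ a) = q a) :
    B.IsOrthogonal φ := by
  intro a b
  simp only [hB, QuadraticMap.polar, ← map_add, hφ]

theorem stmt_15_general (hB : B.IsRefl) {U X V : Submodule R W}
    (hUU : U ≤ B.orthogonal U) (hUX : X ≤ B.orthogonal U) (hVX : X ≤ B.orthogonal V)
    {F : Type*} [FunLike F W W] [AddMonoidHomClass F W W] {φ : F} (hφ : B.IsOrthogonal φ)
    {φX : X → X} {C : X → U} {ψ : V → V} {D : V → X} {A : V → U}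
    (hblockX : ∀ z : X, φ z = φX z + φ (C z))
    (hblockV : ∀ y : V, φ y = ψ y + φX (D y) + φ (A y)) (y : V) (z : X) :
    B y (C z) = -B (D y) z := by
  have hφX : φ (z - C z) = φX z := by rw [map_sub, hblockX, add_sub_cancel_right]
  have hψ : φ (y - A y - (D y - C (D y))) = ψ y := by
    rw [map_sub, map_sub, map_sub, hblockV, hblockX (D y)]
    abel
  have hortho : B (y - A y - (D y - C (D y))) (z - C z) = 0 := by
    rw [← hφ, hφX, hψ]
    exact hVX (φX z).2 _ (ψ y).2
  have hyz : B y z = 0 := hVX z.2 y y.2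
  have hUz (a : U) : B a z = 0 := hUX z.2 a a.2
  have hUC (a : U) : B a (C z) = 0 := hUU (C z).2 a a.2
  have hDC : B (D y) (C z) = 0 := hB.eq_zero (hUX (D y).2 (C z) (C z).2)
  simp only [map_sub, LinearMap.sub_apply, hyz, hUz, hUC, hDC, sub_zero, zero_sub] at hortho
  linear_combination -hortho

end

/-- In the block decomposition `W = span U ⊕ span X ⊕ span V` of an element
`φ ∈ O(q,k)^{I_τ}`, the blocks `C : span X → span U` and `D : span V → span X` satisfy
`B(v, Cx) = B(Dv, x)`; in particular `D` is completely determined by `C`. -/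
theorem stmt_15
    {k : Type*} [Field k] [CharP k 2]
    {W : Type*} [AddCommGroup W] [Module k W] [FiniteDimensional k W]
    (q : W → k) (hq : ∀ (a : k) (w : W), q (a • w) = a ^ 2 * q w)
    (B : LinearMap.BilinForm k W)
    (hB : ∀ w w' : W, B w w' = q (w + w') + q w + q w')
    (hnd : ∀ w : W, (∀ w' : W, B w w' = 0) → w = 0)
    (r l : ℕ) (hlr : l ≤ r) (hdim : Module.finrank k W = 2 * r)
    (u v : Fin l → W) (x : Fin (2 * r - 2 * l) → W)
    (hu0 : ∀ i, q (u i) ≠ 0)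
    (huo : ∀ i j, i ≠ j → B (u i) (u j) = 0)
    (hvo : ∀ i j, B (v i) (v j) = 0)
    (huv : ∀ i j, B (u i) (v j) = if i = j then 1 else 0)
    (hux : ∀ i j, B (u i) (x j) = 0)
    (hvx : ∀ i j, B (v i) (x j) = 0)
    (hxli : LinearIndependent k x)
    (hspan : Submodule.span k (Set.range u ∪ Set.range v ∪ Set.range x) = ⊤)
    (SU SV SX : Submodule k W)
    (hSU : SU = Submodule.span k (Set.range u))
    (hSV : SV = Submodule.span k (Set.range v))
    (hSX : SX = Submodule.span k (Set.range x))
    (hudim : Module.finrank k SU = l)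
    (τs : Fin l → (W ≃ₗ[k] W))
    (hτs : ∀ i z, τs i z = z + ((q (u i))⁻¹ * B (u i) z) • u i)
    (τ : W ≃ₗ[k] W)
    (hτ : τ = (List.ofFn τs).reverse.prod)
    (hτ2 : τ * τ = 1) (hτ1 : τ ≠ 1)
    (hτred : ∀ m < l, ¬ ∃ (w : Fin m → W) (ρs : Fin m → (W ≃ₗ[k] W)),
        (∀ i, q (w i) ≠ 0 ∧ ∀ z, ρs i z = z + ((q (w i))⁻¹ * B (w i) z) • w i) ∧
        τ = (List.ofFn ρs).reverse.prod)
    (φ : W ≃ₗ[k] W) (hφO : ∀ w, q (φ w) = q w) (hfix : τ * φ * τ⁻¹ = φ)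
    -- the block upper-triangular form of `φ`
    (φX : SX →ₗ[k] SX) (C : SX →ₗ[k] SU) (ψ : SV ≃ₗ[k] SV)
    (D : SV →ₗ[k] SX) (A : SV →ₗ[k] SU)
    (hblockU : ∀ a : SU, φ (a : W) ∈ SU)
    (hblockX : ∀ z : SX, φ (z : W) = (φX z : W) + φ ((C z : W)))
    (hblockV : ∀ y : SV, φ (y : W) = (ψ y : W) + (φX (D y) : W) + φ ((A y : W)))
    (hφXSp : ∀ z z' : SX, B ((φX z : W)) ((φX z' : W)) = B (z : W) (z' : W))
    (hψstar : ∀ (a : SU) (y : SV), B (φ (a : W)) ((ψ y : W)) = B (a : W) (y : W)) :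
    ∀ (y : SV) (z : SX), B (y : W) ((C z : W)) = B ((D y : W)) (z : W) := by
  subst hSU hSV hSX
  intro y z
  have hpolar (a b : W) : B a b = QuadraticMap.polar q a b := by
    rw [hB, QuadraticMap.polar, CharTwo.sub_eq_add, CharTwo.sub_eq_add]
  have hAlt : B.IsAlt := isAlt_of_polar_of_charTwo hpolar
  have hC : B y (C z) = -B (D y) z :=
    stmt_15_general hAlt.isRefl (span_range_le_orthogonal_self_of_isAlt hAlt huo)
      (span_range_le_orthogonal_span_range hux) (span_range_le_orthogonal_span_range hvx)
      (isOrthogonal_of_polar hpolar hφO) hblockX hblockV y z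
  rw [hC, CharTwo.neg_eq]
end

section
/- Let W be nonsingular with decomposition W = span(U) ⊕ span(X) ⊕ span(V), where span(U) is totally singular with totally singular nonsingular completion span(V) (B(u_i,v_j) = δ_{ij}) and X is a basis of (span(U ∪ V))^⊥. Assume q restricted to span(U) is anisotropic (q(u) ≠ 0 for all nonzero u ∈ span U). Let x ∈ span(X), ω ∈ k with ω ≠ 0, and let τ_{x,ω}(z) = z + ωB(x,z)x be the symplectic transvection on span(X). Suppose C : span(X) → span(U) is a linear map with q(τ_{x,ω}(z) + Cz) = q(z) for all z ∈ span(X), and let C† : span(V) → span(X) be the linear map determined by B(v, Cz) = B(C†v, z) for all v ∈ span(V), z ∈ span(X). Then there exists a linear map M : span(V) → span(U) such that the block map T = [[id, C, M],[0, τ_{x,ω}, τ_{x,ω}C†],[0, 0, id]] belongs to O(q,k). -/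
/-!
Write `U`, `X`, `V` for the three spans. The defect `q (C z) = q z - q (τ z)` is a constant multiple
of `B(x, z)²`, so anisotropy of `U` forces `C` to vanish wherever `B(x, ·)` does. Hence
`C z = B(x, z) u` for some `u ∈ U`, and dually `C† y = B(u, y) x`. Put `s = x + ω⁻¹ u`. Comparing
values of `q` gives `q s = -ω⁻¹` unless `s = 0`, and either condition makes the transvection
`w ↦ w + ω B(s, w) s` an isometry of the whole space. Expanding it on `U`, `X` and `V` yields the
required block map, with `M y = ω⁻¹ B(u, y) u`.
-/

section Orthogonality

variable {R M : Type*} [CommRing R] [AddCommGroup M] [Module R M] {B : LinearMap.BilinForm R M}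

lemma span_le_orthogonalBilin_span {ι κ : Type*} {f : ι → M} {g : κ → M}
    (h : ∀ i j, B (g j) (f i) = 0) :
    Submodule.span R (Set.range f) ≤ (Submodule.span R (Set.range g)).orthogonalBilin B := by
  rw [Submodule.span_le, Set.range_subset_iff]
  intro i
  have hker : Submodule.span R (Set.range g) ≤ LinearMap.ker (B.flip (f i)) := by
    rw [Submodule.span_le, Set.range_subset_iff]
    exact h i
  exact hker

lemma disjoint_orthogonalBilin_of_sup_eq_top (hB : B.IsRefl) (hsep : B.SeparatingLeft)
    {X Y : Submodule R M} (hYX : Y ≤ X.orthogonalBilin B) (hXY : Y ⊔ X = ⊤) :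
    Disjoint X (X.orthogonalBilin B) := by
  refine Submodule.disjoint_def.2 fun z hz hzX => hsep z fun w => ?_
  have hw : w ∈ Y ⊔ X := hXY ▸ Submodule.mem_top
  obtain ⟨y, hy, x, hx, rfl⟩ := Submodule.mem_sup.1 hw
  rw [map_add, hYX hy z hz, hB _ _ (hzX x hx), add_zero]

end Orthogonality

section Transvection

variable {R M : Type*} [CommRing R] [AddCommGroup M] [Module R M]

lemma map_transvection_polarBilin (Q : QuadraticForm R M) (s w : M) (ω : R) :
    Q (LinearMap.transvection (ω • Q.polarBilin s) s w) =
      Q w + ω * (1 + ω * Q s) * Q.polarBilin s w ^ 2 := by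
  simp only [LinearMap.transvection.apply, QuadraticMap.map_add Q, Q.map_smul,
    QuadraticMap.polar_smul_right, QuadraticMap.polar_comm Q w s, LinearMap.smul_apply,
    QuadraticMap.polarBilin_apply_apply, smul_eq_mul]
  ring

lemma involutive_transvection_polarBilin {Q : QuadraticForm R M} {s : M} {ω : R}
    (h : (1 + ω * Q s) • s = 0) :
    Function.Involutive (LinearMap.transvection (ω • Q.polarBilin s) s) := by
  intro w
  simp only [LinearMap.transvection.apply, map_add, map_smul, LinearMap.smul_apply,
    QuadraticMap.polarBilin_apply_apply, QuadraticMap.polar_self, smul_eq_mul, nsmul_eq_mul,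
    Nat.cast_ofNat]
  linear_combination (norm := module) (2 * ω * QuadraticMap.polar Q s w) • h

/-- The transvection `w ↦ w + ω B(s, w) s` as an isometry of `Q`, where `B` is the polar form.
The condition on `s` says that `Q s = -ω⁻¹` or `s = 0` when the scalars form a field and `ω ≠ 0`. -/
def orthogonalTransvection (Q : QuadraticForm R M) (s : M) (ω : R)
    (h : (1 + ω * Q s) • s = 0) : Q.IsometryEquiv Q where
  __ := LinearEquiv.ofInvolutive _ (involutive_transvection_polarBilin h)
  map_app' w := by
    have hB : (1 + ω * Q s) * Q.polarBilin s w = 0 := by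
      rw [← smul_eq_mul, ← LinearMap.smul_apply, ← map_smul, h, map_zero, LinearMap.zero_apply]
    refine (map_transvection_polarBilin Q s w ω).trans ?_
    linear_combination ω * Q.polarBilin s w * hB

lemma orthogonalTransvection_apply {Q : QuadraticForm R M} {s : M} {ω : R}
    (h : (1 + ω * Q s) • s = 0) (w : M) :
    orthogonalTransvection Q s ω h w = w + (ω * Q.polarBilin s w) • s :=
  rfl

end Transvection

section OrthogonalSubmodules

variable {R M : Type*} [CommRing R] [AddCommGroup M] [Module R M] {Q : QuadraticForm R M}
  {U V X : Submodule R M}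

lemma map_eq_neg_mul_sq_of_map_transvection_add (hUX : U ≤ X.orthogonalBilin Q.polarBilin) {x : X}
    {ω : R} {τ : X →ₗ[R] X} (hτ : ∀ z : X, (τ z : M) = z + (ω * Q.polarBilin x z) • (x : M))
    {C : X →ₗ[R] U} (hC : ∀ z, Q ((τ z : M) + C z) = Q z) (z : X) :
    Q (C z) = -(ω * (1 + ω * Q x)) * Q.polarBilin x z ^ 2 := by
  have horth : QuadraticMap.polar Q (τ z : M) (C z) = 0 := hUX (C z).2 _ (τ z).2
  have hQτ : Q (τ z) = Q z + ω * (1 + ω * Q x) * Q.polarBilin x z ^ 2 := by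
    rw [hτ]
    exact map_transvection_polarBilin Q x z ω
  have hQC := hC z
  rw [QuadraticMap.map_add Q, horth, hQτ] at hQC
  linear_combination hQC

lemma eq_zero_of_domRestrict_polarBilin_eq_zero (hX : Disjoint X (X.orthogonalBilin Q.polarBilin))
    {x : X} (hx : (Q.polarBilin x).domRestrict X = 0) : x = 0 := by
  refine Subtype.ext (Submodule.disjoint_def.1 hX x x.2 fun z hz => ?_)
  have := LinearMap.congr_fun hx ⟨z, hz⟩
  rwa [LinearMap.domRestrict_apply, LinearMap.zero_apply, QuadraticMap.polarBilin_apply_apply,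
    QuadraticMap.polar_comm] at this

lemma adjoint_eq_smul_of_eq_smul (hX : Disjoint X (X.orthogonalBilin Q.polarBilin)) {x : X} {u : U}
    {C : X →ₗ[R] U} (hC : ∀ z : X, C z = Q.polarBilin x z • u) {Cdag : V →ₗ[R] X}
    (hCdag : ∀ (y : V) (z : X), Q.polarBilin y (C z) = Q.polarBilin (Cdag y) z) (y : V) :
    Cdag y = Q.polarBilin u y • x := by
  rw [← sub_eq_zero]
  refine eq_zero_of_domRestrict_polarBilin_eq_zero hX (LinearMap.ext fun z => ?_)
  have h := hCdag y z
  simp only [hC, Submodule.coe_smul, Submodule.coe_sub, LinearMap.domRestrict_apply, map_sub,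
    map_smul, LinearMap.sub_apply, LinearMap.smul_apply, LinearMap.zero_apply, smul_eq_mul,
    QuadraticMap.polarBilin_apply_apply, QuadraticMap.polar_comm Q y] at h ⊢
  linear_combination -h

end OrthogonalSubmodules

lemma two_eq_zero_or_eq_zero_of_polar_self_eq_zero {R M : Type*} [CommRing R] [NoZeroDivisors R]
    [AddCommGroup M] [Module R M] {Q : QuadraticForm R M} (hQ : Q.Anisotropic) {u : M}
    (hu : QuadraticMap.polar Q u u = 0) : (2 : R) = 0 ∨ u = 0 := by
  rw [QuadraticMap.polar_self, two_nsmul, ← two_mul] at hu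
  exact (mul_eq_zero.1 hu).imp_right (hQ u)

lemma exists_eq_smulRight_of_map_eq_mul_sq {k M N : Type*} [Field k] [AddCommGroup M] [Module k M]
    [AddCommGroup N] [Module k N] {Q : QuadraticForm k N} (hQ : Q.Anisotropic) {C : M →ₗ[k] N}
    {f : Module.Dual k M} {c : k} (h : ∀ z, Q (C z) = c * f z ^ 2) :
    ∃ u, C = f.smulRight u ∧ (f = 0 ∧ u = 0 ∨ Q u = c) := by
  have hker (z : M) (hz : f z = 0) : C z = 0 := hQ _ (by rw [h, hz]; ring)
  rcases eq_or_ne f 0 with rfl | hf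
  · exact ⟨0, by ext z; simpa using hker z rfl, .inl ⟨rfl, rfl⟩⟩
  · obtain ⟨z₁, hz₁⟩ := LinearMap.surjective hf 1
    refine ⟨C z₁, ?_, .inr (by rw [h, hz₁]; ring)⟩
    ext z
    have := hker (z - f z • z₁) (by simp [hz₁])
    rwa [map_sub, map_smul, sub_eq_zero] at this

section TransvectionExtension

variable {k W : Type*} [Field k] [AddCommGroup W] [Module k W] {Q : QuadraticForm k W}
  {U V X : Submodule k W}

lemma one_add_mul_map_add_inv_smul_smul_eq_zero {x u : W} {ω : k} (hω : ω ≠ 0)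
    (hxu : Q.polarBilin x u = 0) (h : x = 0 ∧ u = 0 ∨ Q u = -(ω * (1 + ω * Q x))) :
    (1 + ω * Q (x + ω⁻¹ • u)) • (x + ω⁻¹ • u) = 0 := by
  rcases h with ⟨rfl, rfl⟩ | hu
  · simp
  · have hQs : 1 + ω * Q (x + ω⁻¹ • u) = 0 := by
      rw [QuadraticMap.polarBilin_apply_apply] at hxu
      rw [QuadraticMap.map_add Q, Q.map_smul, QuadraticMap.polar_smul_right, hxu, hu, smul_zero,
        smul_eq_mul]
      field_simp
      ring
    rw [hQs, zero_smul]

lemma exists_eq_polarBilin_smul_of_map_transvection_add (hUX : U ≤ X.orthogonalBilin Q.polarBilin)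
    (hX : Disjoint X (X.orthogonalBilin Q.polarBilin)) (hU : (Q.restrict U).Anisotropic) {x : X}
    {ω : k} {τ : X →ₗ[k] X} (hτ : ∀ z : X, (τ z : W) = z + (ω * Q.polarBilin x z) • (x : W))
    {C : X →ₗ[k] U} (hC : ∀ z, Q ((τ z : W) + C z) = Q z) :
    ∃ u : U, (∀ z : X, C z = Q.polarBilin x z • u) ∧
      ((x : W) = 0 ∧ (u : W) = 0 ∨ Q u = -(ω * (1 + ω * Q x))) := by
  obtain ⟨u, hCu, hu⟩ := exists_eq_smulRight_of_map_eq_mul_sq (Q := Q.restrict U) hU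
    (f := (Q.polarBilin x).domRestrict X) (map_eq_neg_mul_sq_of_map_transvection_add hUX hτ hC)
  refine ⟨u, LinearMap.congr_fun hCu, hu.imp_left fun ⟨hx, hu₀⟩ => ?_⟩
  simp [eq_zero_of_domRestrict_polarBilin_eq_zero hX hx, hu₀]

theorem stmt_16_general (hUU : U ≤ U.orthogonalBilin Q.polarBilin)
    (hUX : U ≤ X.orthogonalBilin Q.polarBilin)
    (hVX : V ≤ X.orthogonalBilin Q.polarBilin) (hX : Disjoint X (X.orthogonalBilin Q.polarBilin))
    (hU : (Q.restrict U).Anisotropic) {x : X} {ω : k} (hω : ω ≠ 0) {τ : X →ₗ[k] X}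
    (hτ : ∀ z : X, (τ z : W) = z + (ω * Q.polarBilin x z) • (x : W))
    {C : X →ₗ[k] U} (hC : ∀ z, Q ((τ z : W) + C z) = Q z) {Cdag : V →ₗ[k] X}
    (hCdag : ∀ (y : V) (z : X), Q.polarBilin y (C z) = Q.polarBilin (Cdag y) z) :
    ∃ (M : V →ₗ[k] U) (T : Q.IsometryEquiv Q),
      (∀ a : U, T a = a) ∧
      (∀ z : X, T z = τ z + C z) ∧
      (∀ y : V, T y = y + τ (Cdag y) + M y) := by
  obtain ⟨u, hCu, hu⟩ := exists_eq_polarBilin_smul_of_map_transvection_add hUX hX hU hτ hC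
  have hCdagu := adjoint_eq_smul_of_eq_smul hX hCu hCdag
  have hux (z : X) : Q.polarBilin u z = 0 :=
    (QuadraticMap.polar_comm Q _ _).trans (hUX u.2 z z.2)
  let T := orthogonalTransvection Q _ ω
    (one_add_mul_map_add_inv_smul_smul_eq_zero hω (hUX u.2 x x.2) hu)
  have hT (w : W) : T w =
      w + (ω * Q.polarBilin x w + Q.polarBilin u w) • ((x : W) + ω⁻¹ • (u : W)) := by
    simp [T, orthogonalTransvection_apply, mul_add, hω]
  have hτx (y : V) : Q.polarBilin u y • (τ x : W) = Q.polarBilin u y • (x : W) := by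
    rw [hτ]
    rcases two_eq_zero_or_eq_zero_of_polar_self_eq_zero hU (hUU u.2 u u.2) with h2 | rfl
    · simp [QuadraticMap.polar_self, h2]
    · simp
  refine ⟨((ω⁻¹ • Q.polarBilin u).domRestrict V).smulRight u, T, fun a => ?_, fun z => ?_,
    fun y => ?_⟩
  · rw [hT, hUX a.2 x x.2, hUU a.2 u u.2]
    simp
  · rw [hT, hτ, hCu, hux, add_zero, Submodule.coe_smul]
    match_scalars <;> field_simp
  · rw [hT, hVX y.2 x x.2, hCdagu, map_smul, Submodule.coe_smul, hτx]
    simp only [QuadraticMap.polarBilin_apply_apply, LinearMap.smulRight_apply,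
      LinearMap.domRestrict_apply, LinearMap.smul_apply, smul_eq_mul, Submodule.coe_smul]
    module

end TransvectionExtension

lemma exists_quadraticForm_of_charTwo {k W : Type*} [CommRing k] [CharP k 2] [AddCommGroup W]
    [Module k W] {q : W → k} (hq : ∀ (a : k) (w : W), q (a • w) = a ^ 2 * q w)
    {B : LinearMap.BilinForm k W} (hB : ∀ w w' : W, B w w' = q (w + w') + q w + q w') :
    ∃ Q : QuadraticForm k W, ⇑Q = q ∧ Q.polarBilin = B := by
  have hadd (w w' : W) : q (w + w') = q w + q w' + B w w' := by
    rw [hB]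
    linear_combination (-(q w) - q w') * CharTwo.two_eq_zero (R := k)
  let Q : QuadraticForm k W :=
    { toFun := q
      toFun_smul := fun a w => by rw [hq, sq, smul_eq_mul]
      exists_companion' := ⟨B, hadd⟩ }
  refine ⟨Q, rfl, LinearMap.ext₂ fun w w' => ?_⟩
  simp [QuadraticMap.polar, Q, hadd, add_sub_assoc]

/-- With `W = span U ⊕ span X ⊕ span V` nonsingular, `span U` totally singular
and anisotropic, for a symplectic transvection `τ_{x,ω}` on `span X` and a map
`C : span X → span U` with `q(τ_{x,ω}(z) + Cz) = q(z)`, there exists `M : span V → span U`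
such that the block map `[[id, C, M],[0, τ_{x,ω}, τ_{x,ω}C†],[0,0,id]]` is in `O(q,k)`. -/
theorem stmt_16
    {k : Type*} [Field k] [CharP k 2]
    {W : Type*} [AddCommGroup W] [Module k W] [FiniteDimensional k W]
    (q : W → k) (hq : ∀ (a : k) (w : W), q (a • w) = a ^ 2 * q w)
    (B : LinearMap.BilinForm k W)
    (hB : ∀ w w' : W, B w w' = q (w + w') + q w + q w')
    (hnd : ∀ w : W, (∀ w' : W, B w w' = 0) → w = 0)
    (l nX : ℕ) (u v : Fin l → W) (x : Fin nX → W)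
    (huo : ∀ i j, B (u i) (u j) = 0)
    (hvo : ∀ i j, B (v i) (v j) = 0)
    (huv : ∀ i j, B (u i) (v j) = if i = j then 1 else 0)
    (hux : ∀ i j, B (u i) (x j) = 0)
    (hvx : ∀ i j, B (v i) (x j) = 0)
    (hxli : LinearIndependent k x)
    (hspan : Submodule.span k (Set.range u ∪ Set.range v ∪ Set.range x) = ⊤)
    (SU SV SX : Submodule k W)
    (hSU : SU = Submodule.span k (Set.range u))
    (hSV : SV = Submodule.span k (Set.range v))
    (hSX : SX = Submodule.span k (Set.range x))
    -- `span U` is anisotropic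
    (hUan : ∀ a : SU, a ≠ 0 → q (a : W) ≠ 0)
    -- the symplectic transvection `τ_{x₀,ω}` on `span X`
    (x₀ : SX) (ω : k) (hω : ω ≠ 0)
    (τxω : SX →ₗ[k] SX)
    (hτxω : ∀ z : SX, (τxω z : W) = (z : W) + (ω * B (x₀ : W) (z : W)) • (x₀ : W))
    -- `C` with `q(τ_{x,ω}(z) + Cz) = q(z)` for all `z ∈ span X`
    (C : SX →ₗ[k] SU)
    (hC : ∀ z : SX, q ((τxω z : W) + (C z : W)) = q (z : W))
    -- `C†` determined by `B(v, Cz) = B(C†v, z)`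
    (Cdag : SV →ₗ[k] SX)
    (hCdag : ∀ (y : SV) (z : SX), B (y : W) ((C z : W)) = B ((Cdag y : W)) (z : W)) :
    ∃ (M : SV →ₗ[k] SU) (T : W ≃ₗ[k] W),
      (∀ a : SU, T (a : W) = (a : W)) ∧
      (∀ z : SX, T (z : W) = (τxω z : W) + (C z : W)) ∧
      (∀ y : SV, T (y : W) = (y : W) + (τxω (Cdag y) : W) + (M y : W)) ∧
      (∀ w, q (T w) = q w) := by
  subst hSU hSV hSX
  obtain ⟨Q, rfl, rfl⟩ := exists_quadraticForm_of_charTwo hq hB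
  have hsymm (a b : W) : Q.polarBilin a b = Q.polarBilin b a := QuadraticMap.polar_comm Q a b
  have hUX := span_le_orthogonalBilin_span fun i j => (hsymm (x j) (u i)).trans (hux i j)
  have hVX := span_le_orthogonalBilin_span fun i j => (hsymm (x j) (v i)).trans (hvx i j)
  have hX := disjoint_orthogonalBilin_of_sup_eq_top (fun a b h => (hsymm b a).trans h)
    hnd (sup_le hUX hVX) (by rw [← Submodule.span_union, ← Submodule.span_union, hspan])
  obtain ⟨M, T, hTU, hTX, hTV⟩ := stmt_16_general
    (span_le_orthogonalBilin_span fun i j => huo j i) hUX hVX hX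
    (fun a => not_imp_not.1 (hUan a)) hω hτxω hC hCdag
  exact ⟨M, T.toLinearEquiv, hTU, hTX, hTV, T.map_app⟩
end

section
/- Let W = W₁ ⊥ rad(W), where W₁ is a maximal nonsingular subspace of W (B is nondegenerate on W₁). Then every involution α ∈ O(q,k) leaves rad(W) invariant and can be written, relative to W = rad(W) ⊕ W₁, as α(g + w) = ρ(g) + ρ(Y(w)) + τ(w) for g ∈ rad(W), w ∈ W₁, where: ρ is a linear automorphism of rad(W) preserving q with ρ² = id; τ is a linear automorphism of W₁ with τ² = id which preserves the bilinear form B on W₁ (τ ∈ Sp(B_{W₁},k)); Y : W₁ → rad(W) is linear with Y = ρYτ; and q(τ(w) + ρ(Y(w))) = q(w) for all w ∈ W₁. -/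
/-!
Relative to a decomposition `M = p ⊕ c`, an endomorphism stabilising `p` is block upper triangular,
`f = [[ρ, Z], [0, τ]]`, so `f² = 1` amounts to `ρ² = 1`, `τ² = 1` and `ρZ + Zτ = 0`. The map `Y` of
the theorem is `ρZ`. A surjective isometry preserves the polar form, hence stabilises its radical;
taking `p` to be the radical, the polar form does not see the component `Z w` of `f w = Z w + τ w`,
so `τ` preserves the polar form as well.
-/

section BlockTriangular

variable {R M : Type*} [Ring R] [AddCommGroup M] [Module R M] {p c : Submodule R M}

/-- The diagonal block `c → c` of an endomorphism relative to `M = p ⊕ c`, as in the compression of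
an operator to a subspace. -/
noncomputable def compression (h : IsCompl p c) (f : Module.End R M) : Module.End R c :=
  c.projectionOnto p h.symm ∘ₗ f ∘ₗ c.subtype

/-- The off-diagonal block `c → p` of an endomorphism relative to `M = p ⊕ c`. -/
noncomputable def offDiagonal (h : IsCompl p c) (f : Module.End R M) : c →ₗ[R] p :=
  p.projectionOnto c h ∘ₗ f ∘ₗ c.subtype

variable (h : IsCompl p c) (f g : Module.End R M)

theorem offDiagonal_add_compression (w : c) :
    (offDiagonal h f w : M) + compression h f w = f w :=
  Submodule.projection_add_projection_eq_self h (f w)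

theorem compression_one : compression h (1 : Module.End R M) = 1 :=
  Submodule.projectionOnto_comp_subtype h.symm

theorem offDiagonal_one : offDiagonal h (1 : Module.End R M) = 0 :=
  LinearMap.ext <| Submodule.projectionOnto_apply_right h

variable {f}

theorem compression_mul (hf : ∀ x ∈ p, f x ∈ p) :
    compression h (f * g) = compression h f * compression h g := by
  ext1 w
  change c.projectionOnto p h.symm (f (g w)) = c.projectionOnto p h.symm (f (compression h g w))
  rw [← offDiagonal_add_compression h g w, map_add, map_add,
    Submodule.projectionOnto_apply_of_mem_right h.symm (hf _ (offDiagonal h g w).2), zero_add]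

theorem offDiagonal_mul (hf : ∀ x ∈ p, f x ∈ p) :
    offDiagonal h (f * g) =
      f.restrict hf ∘ₗ offDiagonal h g + offDiagonal h f ∘ₗ compression h g := by
  ext1 w
  change p.projectionOnto c h (f (g w)) =
    f.restrict hf (offDiagonal h g w) + p.projectionOnto c h (f (compression h g w))
  rw [← offDiagonal_add_compression h g w, map_add, map_add,
    Submodule.projectionOnto_apply_of_mem_left h (hf _ (offDiagonal h g w).2)]
  rfl

theorem compression_involutive (hf : ∀ x ∈ p, f x ∈ p) (hff : f * f = 1) :
    Function.Involutive (compression h f) := fun w => by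
  rw [← Module.End.mul_apply, ← compression_mul h f hf, hff, compression_one,
    Module.End.one_apply]

theorem restrict_offDiagonal_eq_neg (hf : ∀ x ∈ p, f x ∈ p) (hff : f * f = 1) (w : c) :
    f.restrict hf (offDiagonal h f w) = -offDiagonal h f (compression h f w) := by
  have hblock := offDiagonal_mul h f hf
  rw [hff, offDiagonal_one] at hblock
  exact eq_neg_of_add_eq_zero_left (LinearMap.congr_fun hblock w).symm

end BlockTriangular

theorem bilin_compression_compression {R M N : Type*} [CommRing R] [AddCommGroup M] [Module R M]
    [AddCommGroup N] [Module R N] {B : LinearMap.BilinMap R M N} {p c : Submodule R M}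
    (h : IsCompl p c) (f : Module.End R M) (hleft : p ≤ B.ker) (hright : p ≤ B.flip.ker)
    (w w' : c) :
    B (compression h f w) (compression h f w') = B (f w) (f w') := by
  have hl (g : p) : B g = 0 := hleft g.2
  have hr (x : M) (g : p) : B x g = 0 := LinearMap.congr_fun (hright g.2) x
  rw [← offDiagonal_add_compression h f w, ← offDiagonal_add_compression h f w', map_add, hr,
    zero_add, LinearMap.map_add₂, hl, LinearMap.zero_apply, zero_add]

section Polar

open QuadraticMap

variable {R M N : Type*}

theorem polar_map_map_of_isometry {M' F : Type*} [AddCommGroup M] [AddCommGroup M']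
    [AddCommGroup N] [FunLike F M M'] [AddHomClass F M M'] {q : M → N} {q' : M' → N} {f : F}
    (hf : ∀ x, q' (f x) = q x) (x y : M) : polar q' (f x) (f y) = polar q x y := by
  simp only [polar, ← map_add, hf]

variable [CommRing R] [AddCommGroup M] [Module R M] [AddCommGroup N] [Module R N]

theorem flip_polarBilin (Q : QuadraticMap R M N) : Q.polarBilin.flip = Q.polarBilin :=
  LinearMap.ext₂ fun x y => polar_comm Q y x

theorem map_mem_ker_polarBilin {Q : QuadraticMap R M N} {f : Module.End R M}
    (hsurj : Function.Surjective f) (hf : ∀ x, Q (f x) = Q x) {g : M} (hg : g ∈ Q.polarBilin.ker) :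
    f g ∈ Q.polarBilin.ker := by
  refine LinearMap.ext <| hsurj.forall.2 fun x => ?_
  calc polar Q (f g) (f x) = polar Q g x := polar_map_map_of_isometry hf g x
    _ = 0 := LinearMap.congr_fun hg x

end Polar

theorem neg_eq_self_of_charTwo (R : Type*) {M : Type*} [Ring R] [CharP R 2] [AddCommGroup M]
    [Module R M] (x : M) : -x = x := by
  rw [← neg_one_smul R, CharTwo.neg_eq, one_smul]

theorem exists_quadraticMap_of_charTwo {R M N : Type*} [CommRing R] [CharP R 2] [AddCommGroup M]
    [Module R M] [AddCommGroup N] [Module R N] {q : M → N}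
    (hq : ∀ (a : R) (x : M), q (a • x) = a ^ 2 • q x) {B : LinearMap.BilinMap R M N}
    (hB : ∀ x y, B x y = q (x + y) + q x + q y) :
    ∃ Q : QuadraticMap R M N, ⇑Q = q ∧ Q.polarBilin = B := by
  have hpolar (x y : M) : QuadraticMap.polar q x y = B x y := by
    rw [QuadraticMap.polar, hB, sub_eq_add_neg, sub_eq_add_neg, neg_eq_self_of_charTwo R,
      neg_eq_self_of_charTwo R]
  refine ⟨.ofPolar q (fun a x => by rw [hq, sq]) ?_ ?_, rfl, LinearMap.ext₂ hpolar⟩ <;>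
    simp [hpolar]

theorem stmt_18_general
    {R M N : Type*} [CommRing R] [AddCommGroup M] [Module R M] [AddCommGroup N] [Module R N]
    (Q : QuadraticMap R M N) {c : Submodule R M} (hc : IsCompl Q.polarBilin.ker c)
    (α : M ≃ₗ[R] M) (hαQ : ∀ x, Q (α x) = Q x) (hα2 : α * α = 1) :
    (∀ g ∈ Q.polarBilin.ker, α g ∈ Q.polarBilin.ker) ∧
    ∃ (ρ : Q.polarBilin.ker ≃ₗ[R] Q.polarBilin.ker) (τ : c ≃ₗ[R] c)
      (Y : c →ₗ[R] Q.polarBilin.ker),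
      (∀ g, Q (ρ g) = Q g) ∧
      (∀ g, ρ (ρ g) = g) ∧
      (∀ w, τ (τ w) = w) ∧
      (∀ w w', Q.polarBilin (τ w) (τ w') = Q.polarBilin w w') ∧
      (∀ w, Y w = -ρ (Y (τ w))) ∧
      (∀ w, Q (τ w + ρ (Y w)) = Q w) ∧
      (∀ (g : Q.polarBilin.ker) (w : c), α (g + w) = ρ g + ρ (Y w) + τ w) := by
  let f : Module.End R M := α
  have hff : f * f = 1 := congrArg LinearEquiv.toLinearMap hα2
  have hker : ∀ g ∈ Q.polarBilin.ker, f g ∈ Q.polarBilin.ker := fun _ =>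
    map_mem_ker_polarBilin α.surjective hαQ
  let r := f.restrict hker
  have hr : Function.Involutive r := fun g => Subtype.ext (LinearMap.congr_fun hff g)
  have ht := compression_involutive hc hker hff
  have hα (w : c) : (offDiagonal hc f w : M) + compression hc f w = α w :=
    offDiagonal_add_compression hc f w
  refine ⟨hker, .ofInvolutive r hr, .ofInvolutive _ ht, r ∘ₗ offDiagonal hc f,
    fun g => hαQ g, hr, ht, fun w w' => ?_, fun w => ?_, fun w => ?_, fun g w => ?_⟩ <;>
    simp only [LinearEquiv.coe_ofInvolutive, LinearMap.comp_apply, hr _]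
  · rw [bilin_compression_compression hc f le_rfl
      (congrArg LinearMap.ker (flip_polarBilin Q)).ge]
    exact polar_map_map_of_isometry hαQ _ _
  · exact restrict_offDiagonal_eq_neg hc hker hff w
  · rw [add_comm, hα, hαQ]
  · rw [map_add, add_assoc, hα]
    rfl

/-- For `W = W₁ ⊥ rad(W)`, every involution `α ∈ O(q,k)` leaves `rad(W)`
invariant and has the block form `α(g + w) = ρ(g) + ρ(Y(w)) + τ(w)` with `ρ` an involutive
isometry of `rad(W)`, `τ` an involutive element of `Sp(B_{W₁},k)`, `Y : W₁ → rad(W)` linear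
with `Y = ρYτ`, and `q(τ(w) + ρ(Y(w))) = q(w)` for all `w ∈ W₁`. -/
theorem stmt_18
    {k : Type*} [Field k] [CharP k 2]
    {W : Type*} [AddCommGroup W] [Module k W] [FiniteDimensional k W]
    (q : W → k) (hq : ∀ (a : k) (w : W), q (a • w) = a ^ 2 * q w)
    (B : LinearMap.BilinForm k W)
    (hB : ∀ w w' : W, B w w' = q (w + w') + q w + q w')
    (R W₁ : Submodule k W)
    (hR : ∀ g : W, g ∈ R ↔ ∀ w : W, B g w = 0)
    (hcompl : IsCompl R W₁)
    (hW₁nd : ∀ w ∈ W₁, (∀ w' ∈ W₁, B w w' = 0) → w = 0)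
    (α : W ≃ₗ[k] W)
    (hαO : ∀ w, q (α w) = q w)
    (hα2 : α * α = 1) (hα1 : α ≠ 1) :
    (∀ g ∈ R, α g ∈ R) ∧
    ∃ (ρ : R ≃ₗ[k] R) (τ : W₁ ≃ₗ[k] W₁) (Y : W₁ →ₗ[k] R),
      (∀ g : R, q ((ρ g : W)) = q (g : W)) ∧
      (∀ g : R, ρ (ρ g) = g) ∧
      (∀ w : W₁, τ (τ w) = w) ∧
      (∀ w w' : W₁, B ((τ w : W)) ((τ w' : W)) = B (w : W) (w' : W)) ∧
      (∀ w : W₁, Y w = ρ (Y (τ w))) ∧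
      (∀ w : W₁, q ((τ w : W) + (ρ (Y w) : W)) = q (w : W)) ∧
      (∀ (g : R) (w : W₁), α ((g : W) + (w : W)) = (ρ g : W) + (ρ (Y w) : W) + (τ w : W)) := by
  obtain ⟨Q, rfl, rfl⟩ := exists_quadraticMap_of_charTwo hq hB
  obtain rfl : R = Q.polarBilin.ker := by ext g; simp [hR, LinearMap.ext_iff]
  simpa only [neg_eq_self_of_charTwo k] using stmt_18_general Q hcompl α hαO hα2
end

section
/- Let W = W₁ ⊥ rad(W), with W₁ a maximal nonsingular subspace. For i = 1, 2 let α_i ∈ O(q,k) be an involution written, relative to W = rad(W) ⊕ W₁, as α_i(g + w) = ρ_i(g) + Y_i(w) + τ_i(w) for g ∈ rad(W), w ∈ W₁, where ρ_i is a q-preserving linear automorphism of rad(W), Y_i : W₁ → rad(W) is linear, and τ_i is a linear automorphism of W₁ preserving B on W₁. Then α₁ and α₂ are conjugate in O(q,k) if and only if there exist a q-preserving linear automorphism ψ of rad(W), a B-preserving linear automorphism μ of W₁ (μ ∈ Sp(B_{W₁},k)), and a linear map Z : W₁ → rad(W) satisfying q(w) = q(μ(w)) + q(Z(w)) for all w ∈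 W₁ (so that g + w ↦ ψ(g) + ψ(Z(w)) + μ(w) lies in O(q,k)), such that: (1) ψρ₁ψ⁻¹ = ρ₂; (2) μτ₁μ⁻¹ = τ₂; and (3) ψ ∘ (ρ₁Z + Zτ₁ + Y₁) ∘ μ⁻¹ = Y₂. -/
/-!
Relative to `W = rad(W) ⊕ W₁` an endomorphism preserving `rad(W)` is an upper triangular `2 × 2`
block matrix, and these multiply as matrices. Hence `φ α₁ = α₂ φ`, for `φ` with blocks `ψ`, `ψ Z`,
`μ`, is an equality of block matrices: its diagonal entries say that `ψ` conjugates `ρ₁` into `ρ₂`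
and `μ` conjugates `τ₁` into `τ₂`, and its corner entry is `ψ Y₁ + ψ Z τ₁ = ρ₂ ψ Z + Y₂ μ`.
Since `ρ₂ ψ = ψ ρ₁`, this says that `ψ (Z τ₁ - ρ₁ Z + Y₁) μ⁻¹ = Y₂`, over any commutative ring.

It remains to see which `φ` are isometries. Since `q` is additive on `rad(W)` and across the
decomposition, `q(φ(g + w)) = q(ψ(g + Z w)) + q(μ w)`, so `φ` is an isometry iff `ψ` is and
`q(w) = q(μ w) + q(Z w)` on `W₁`. The latter forces `μ` to preserve the polar form.
-/

section TriangularBlocks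

variable {k W : Type*} [Ring k] [AddCommGroup W] [Module k W] {R S : Submodule k W}

/-- The endomorphism `f` is block upper triangular relative to `R` and `S`, with diagonal blocks
`ρ`, `τ` and corner `Y`, that is, with matrix `[[ρ, Y], [0, τ]]` when `R` and `S` are
complementary. -/
def HasTriangularBlocks (f : Module.End k W) (ρ : Module.End k R) (Y : S →ₗ[k] R)
    (τ : Module.End k S) : Prop :=
  ∀ (g : R) (w : S), f (g + w) = ρ g + Y w + τ w

namespace HasTriangularBlocks

variable {f f' : Module.End k W} {ρ ρ' : Module.End k R} {Y Y' : S →ₗ[k] R} {τ τ' : Module.End k S}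

theorem apply_left (hf : HasTriangularBlocks f ρ Y τ) (g : R) : f g = ρ g := by
  simpa using hf g 0

theorem apply_right (hf : HasTriangularBlocks f ρ Y τ) (w : S) : f w = Y w + τ w := by
  simpa using hf 0 w

protected theorem one : HasTriangularBlocks (1 : Module.End k W) 1 (0 : S →ₗ[k] R) 1 :=
  fun g w => by simp

protected theorem mul (hf : HasTriangularBlocks f ρ Y τ) (hf' : HasTriangularBlocks f' ρ' Y' τ') :
    HasTriangularBlocks (f * f') (ρ * ρ') (ρ ∘ₗ Y' + Y ∘ₗ τ') (τ * τ') := fun g w => by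
  rw [Module.End.mul_apply, hf' g w, ← Submodule.coe_add, hf]
  simp [add_assoc]

theorem eq_iff (h : IsCompl R S) (hf : HasTriangularBlocks f ρ Y τ)
    (hf' : HasTriangularBlocks f' ρ' Y' τ') : f = f' ↔ ρ = ρ' ∧ Y = Y' ∧ τ = τ' := by
  constructor
  · rintro rfl
    have corner (w : S) : (Y w, τ w) = (Y' w, τ' w) :=
      (Submodule.prodEquivOfIsCompl R S h).injective
        ((hf.apply_right w).symm.trans (hf'.apply_right w))
    exact ⟨LinearMap.ext fun g => Subtype.ext ((hf.apply_left g).symm.trans (hf'.apply_left g)),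
      LinearMap.ext fun w => congrArg Prod.fst (corner w),
      LinearMap.ext fun w => congrArg Prod.snd (corner w)⟩
  · rintro ⟨rfl, rfl, rfl⟩
    exact LinearMap.ext_on_codisjoint h.codisjoint
      (fun g hg => (hf.apply_left ⟨g, hg⟩).trans (hf'.apply_left ⟨g, hg⟩).symm)
      (fun w hw => (hf.apply_right ⟨w, hw⟩).trans (hf'.apply_right ⟨w, hw⟩).symm)

end HasTriangularBlocks

theorem exists_hasTriangularBlocks (h : IsCompl R S) (f : Module.End k W) (hf : ∀ x ∈ R, f x ∈ R) :
    ∃ (ρ : Module.End k R) (Y : S →ₗ[k] R) (τ : Module.End k S), HasTriangularBlocks f ρ Y τ := by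
  refine ⟨f.restrict hf, R.projectionOnto S h ∘ₗ f ∘ₗ S.subtype,
    S.projectionOnto R h.symm ∘ₗ f ∘ₗ S.subtype, fun g w => ?_⟩
  rw [map_add, add_assoc]
  exact congrArg (f g + ·) (Submodule.projection_add_projection_eq_self h (f w)).symm

theorem exists_equiv_hasTriangularBlocks_of_mem_iff (h : IsCompl R S) (φ : W ≃ₗ[k] W)
    (hφ : ∀ x, φ x ∈ R ↔ x ∈ R) :
    ∃ (ψ : R ≃ₗ[k] R) (Y : S →ₗ[k] R) (μ : S ≃ₗ[k] S),
      HasTriangularBlocks (φ : Module.End k W) ψ Y μ := by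
  obtain ⟨ψ, Y, μ, hblk⟩ := exists_hasTriangularBlocks h (φ : Module.End k W) fun x => (hφ x).2
  obtain ⟨ψ', Y', μ', hblk'⟩ := exists_hasTriangularBlocks h (φ.symm : Module.End k W)
    fun x hx => (hφ _).1 (by simpa using hx)
  have hmul : (φ : Module.End k W) * φ.symm = 1 := φ.comp_symm
  have hmul' : (φ.symm : Module.End k W) * φ = 1 := φ.symm_comp
  obtain ⟨hψ, -, hμ⟩ := ((hblk.mul hblk').eq_iff h .one).1 hmul
  obtain ⟨hψ', -, hμ'⟩ := ((hblk'.mul hblk).eq_iff h .one).1 hmul'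
  exact ⟨.ofLinearMap ψ ψ' hψ hψ', Y, .ofLinearMap μ μ' hμ hμ', hblk⟩

theorem exists_equiv_hasTriangularBlocks (h : IsCompl R S) (ψ : R ≃ₗ[k] R) (Y : S →ₗ[k] R)
    (μ : S ≃ₗ[k] S) : ∃ φ : W ≃ₗ[k] W, HasTriangularBlocks (φ : Module.End k W) ψ Y μ := by
  let e := Submodule.prodEquivOfIsCompl S R h.symm
  refine ⟨e.symm ≪≫ₗ μ.skewProd ψ Y ≪≫ₗ e, fun g w => ?_⟩
  have he : e.symm (g + w) = (w, g) := by
    rw [LinearEquiv.symm_apply_eq, add_comm]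
    rfl
  simp [he, e, add_comm]

end TriangularBlocks

theorem HasTriangularBlocks.conj_eq_iff {k W : Type*} [CommRing k] [AddCommGroup W] [Module k W]
    {R S : Submodule k W} (h : IsCompl R S) {α₁ α₂ : Module.End k W} {ρ₁ ρ₂ : Module.End k R}
    {Y₁ Y₂ Z : S →ₗ[k] R} {τ₁ τ₂ : Module.End k S} {φ : W ≃ₗ[k] W} {ψ : R ≃ₗ[k] R} {μ : S ≃ₗ[k] S}
    (hα₁ : HasTriangularBlocks α₁ ρ₁ Y₁ τ₁) (hα₂ : HasTriangularBlocks α₂ ρ₂ Y₂ τ₂)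
    (hφ : HasTriangularBlocks (φ : Module.End k W) ψ (ψ.toLinearMap ∘ₗ Z) μ) :
    φ.conj α₁ = α₂ ↔ ψ.conj ρ₁ = ρ₂ ∧ μ.conj τ₁ = τ₂ ∧
      ψ.toLinearMap ∘ₗ (Z ∘ₗ τ₁ - ρ₁ ∘ₗ Z + Y₁) ∘ₗ μ.symm.toLinearMap = Y₂ := by
  have eq_iff_mul := (hφ.mul hα₁).eq_iff h (hα₂.mul hφ)
  rw [LinearEquiv.conj_apply, LinearEquiv.comp_toLinearMap_symm_eq, LinearEquiv.conj_apply,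
    LinearEquiv.comp_toLinearMap_symm_eq, LinearEquiv.conj_apply,
    LinearEquiv.comp_toLinearMap_symm_eq, ← LinearMap.comp_assoc,
    LinearEquiv.comp_toLinearMap_symm_eq]
  refine eq_iff_mul.trans (and_congr_right fun (hρ : ψ.toLinearMap ∘ₗ ρ₁ = ρ₂ ∘ₗ ψ) => ?_)
  rw [and_comm]
  refine and_congr_right fun _ => ?_
  have hρZ : ρ₂ ∘ₗ ψ.toLinearMap ∘ₗ Z = ψ.toLinearMap ∘ₗ ρ₁ ∘ₗ Z := by
    rw [← LinearMap.comp_assoc, ← hρ, LinearMap.comp_assoc]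
  rw [hρZ, ← sub_eq_iff_eq_add', LinearMap.comp_add, LinearMap.comp_sub, LinearMap.comp_assoc,
    sub_add_eq_add_sub, add_comm]

section QuadraticMap

open QuadraticMap

variable {k W N : Type*} [CommRing k] [AddCommGroup W] [Module k W] [AddCommGroup N] [Module k N]
  {Q : QuadraticMap k W N}

theorem map_add_of_mem_ker_polarBilin {g : W} (hg : g ∈ Q.polarBilin.ker) (w : W) :
    Q (g + w) = Q g + Q w := by
  have hpolar : polar Q g w = 0 := LinearMap.congr_fun hg w
  rw [QuadraticMap.map_add Q, hpolar, add_zero]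

theorem map_mem_ker_polarBilin_iff {φ : W ≃ₗ[k] W} (hφ : ∀ w, Q (φ w) = Q w) (x : W) :
    φ x ∈ Q.polarBilin.ker ↔ x ∈ Q.polarBilin.ker := by
  have polar_map (w w' : W) : polar Q (φ w) (φ w') = polar Q w w' := by
    simp only [polar, ← map_add, hφ]
  rw [LinearMap.mem_ker, LinearMap.mem_ker, LinearMap.ext_iff, LinearMap.ext_iff,
    φ.surjective.forall]
  simp only [polarBilin_apply_apply, LinearMap.zero_apply, polar_map]

theorem polar_map_eq_polar_of_eq_map_add_map {V : Type*} [AddCommGroup V] [Module k V]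
    {P : V → N} {f z : V →ₗ[k] W} (hz : ∀ v, z v ∈ Q.polarBilin.ker)
    (hP : ∀ v, P v = Q (f v) + Q (z v)) (v v' : V) : polar Q (f v) (f v') = polar P v v' := by
  have hP_add : Q (f v + f v') + (Q (z v) + Q (z v')) = P (v + v') := by
    rw [hP, map_add f, map_add z, map_add_of_mem_ker_polarBilin (hz v)]
  rw [polar, polar, ← hP_add, hP, hP]
  abel

theorem HasTriangularBlocks.isometry_iff {R S : Submodule k W} (hR : R ≤ Q.polarBilin.ker)
    (h : Codisjoint R S) {φ : Module.End k W} {ψ : Module.End k R} {Z : S →ₗ[k] R}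
    {μ : Module.End k S} (hφ : HasTriangularBlocks φ ψ (ψ ∘ₗ Z) μ) :
    (∀ w, Q (φ w) = Q w) ↔
      (∀ g : R, Q (ψ g) = Q g) ∧ ∀ w : S, Q w = Q (μ w) + Q (Z w) := by
  have map_right (hψ : ∀ g : R, Q (ψ g) = Q g) (w : S) : Q (φ w) = Q (μ w) + Q (Z w) := by
    rw [hφ.apply_right, map_add_of_mem_ker_polarBilin (hR (Subtype.prop _)), LinearMap.comp_apply,
      hψ, add_comm]
  constructor
  · intro hQ
    have hψ (g : R) : Q (ψ g) = Q g := by rw [← hφ.apply_left, hQ]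
    exact ⟨hψ, fun w => (hQ w).symm.trans (map_right hψ w)⟩
  · rintro ⟨hψ, hμ⟩ x
    obtain ⟨g, w, hg, hw, rfl⟩ := Submodule.codisjoint_iff_exists_add_eq.1 h x
    have hφg : φ g = ψ ⟨g, hg⟩ := hφ.apply_left ⟨g, hg⟩
    have hφw : Q (φ w) = Q w := (map_right hψ ⟨w, hw⟩).trans (hμ ⟨w, hw⟩).symm
    rw [map_add, hφg, map_add_of_mem_ker_polarBilin (hR (Subtype.prop _)), hψ, hφw,
      map_add_of_mem_ker_polarBilin (hR hg)]

theorem exists_quadraticForm_coe_eq_of_charTwo [CharP k 2] {q : W → k}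
    (hq : ∀ (a : k) (w : W), q (a • w) = a ^ 2 * q w) {B : LinearMap.BilinForm k W}
    (hB : ∀ w w', B w w' = q (w + w') + q w + q w') :
    ∃ Q : QuadraticForm k W, ⇑Q = q ∧ Q.polarBilin = B := by
  refine ⟨⟨q, fun a w => by rw [hq, pow_two, smul_eq_mul], B, fun w w' => ?_⟩, rfl, ?_⟩
  · rw [hB]
    linear_combination -(q w + q w') * CharTwo.two_eq_zero (R := k)
  · ext w w'
    rw [hB, polarBilin_apply_apply]
    change q (w + w') - q w - q w' = _
    simp only [CharTwo.sub_eq_add]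

theorem stmt_19_general {S : Submodule k W} (h : IsCompl Q.polarBilin.ker S)
    {α₁ α₂ : Module.End k W} {ρ₁ ρ₂ : Module.End k Q.polarBilin.ker}
    {Y₁ Y₂ : S →ₗ[k] Q.polarBilin.ker} {τ₁ τ₂ : Module.End k S}
    (hα₁ : HasTriangularBlocks α₁ ρ₁ Y₁ τ₁) (hα₂ : HasTriangularBlocks α₂ ρ₂ Y₂ τ₂) :
    (∃ φ : W ≃ₗ[k] W, (∀ w, Q (φ w) = Q w) ∧ φ.conj α₁ = α₂) ↔
      ∃ (ψ : Q.polarBilin.ker ≃ₗ[k] Q.polarBilin.ker) (μ : S ≃ₗ[k] S)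
        (Z : S →ₗ[k] Q.polarBilin.ker),
        (∀ g, Q (ψ g) = Q g) ∧
        (∀ w w', polar Q (μ w : W) (μ w') = polar Q (w : W) w') ∧
        (∀ w : S, Q w = Q (μ w) + Q (Z w)) ∧
        ψ.conj ρ₁ = ρ₂ ∧
        μ.conj τ₁ = τ₂ ∧
        ψ.toLinearMap ∘ₗ (Z ∘ₗ τ₁ - ρ₁ ∘ₗ Z + Y₁) ∘ₗ μ.symm.toLinearMap = Y₂ := by
  constructor
  · rintro ⟨φ, hφQ, hconj⟩
    obtain ⟨ψ, Y, μ, hφ⟩ :=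
      exists_equiv_hasTriangularBlocks_of_mem_iff h φ (map_mem_ker_polarBilin_iff hφQ)
    obtain ⟨Z, rfl⟩ : ∃ Z, Y = ψ.toLinearMap ∘ₗ Z :=
      ⟨ψ.symm.toLinearMap ∘ₗ Y, by ext; simp⟩
    obtain ⟨hψ, hμ⟩ := (hφ.isometry_iff le_rfl h.codisjoint).1 hφQ
    have hμ_polar (w w' : S) : polar Q (μ w : W) (μ w') = polar Q (w : W) w' :=
      polar_map_eq_polar_of_eq_map_add_map (P := fun w : S => Q w)
        (f := S.subtype ∘ₗ μ.toLinearMap) (z := Submodule.subtype _ ∘ₗ Z) (fun v => (Z v).2) hμ w w'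
    exact ⟨ψ, μ, Z, hψ, hμ_polar, hμ, (hα₁.conj_eq_iff h hα₂ hφ).1 hconj⟩
  · rintro ⟨ψ, μ, Z, hψ, -, hμ, hblocks⟩
    obtain ⟨φ, hφ⟩ := exists_equiv_hasTriangularBlocks h ψ (ψ.toLinearMap ∘ₗ Z) μ
    exact ⟨φ, (hφ.isometry_iff le_rfl h.codisjoint).2 ⟨hψ, hμ⟩,
      (hα₁.conj_eq_iff h hα₂ hφ).2 hblocks⟩

end QuadraticMap

/-- For `W = W₁ ⊥ rad(W)` and involutions `α₁, α₂ ∈ O(q,k)` with block data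
`(ρᵢ, Yᵢ, τᵢ)`, the involutions are conjugate in `O(q,k)` iff there are a `q`-preserving
automorphism `ψ` of `rad(W)`, a `B`-preserving automorphism `μ` of `W₁`, and a linear
`Z : W₁ → rad(W)` with `q(w) = q(μ(w)) + q(Z(w))`, such that `ψρ₁ψ⁻¹ = ρ₂`,
`μτ₁μ⁻¹ = τ₂`, and `ψ ∘ (ρ₁Z + Zτ₁ + Y₁) ∘ μ⁻¹ = Y₂`. -/
theorem stmt_19
    {k : Type*} [Field k] [CharP k 2]
    {W : Type*} [AddCommGroup W] [Module k W] [FiniteDimensional k W]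
    (q : W → k) (hq : ∀ (a : k) (w : W), q (a • w) = a ^ 2 * q w)
    (B : LinearMap.BilinForm k W)
    (hB : ∀ w w' : W, B w w' = q (w + w') + q w + q w')
    (R W₁ : Submodule k W)
    (hR : ∀ g : W, g ∈ R ↔ ∀ w : W, B g w = 0)
    (hcompl : IsCompl R W₁)
    (hW₁nd : ∀ w ∈ W₁, (∀ w' ∈ W₁, B w w' = 0) → w = 0)
    (α₁ α₂ : W ≃ₗ[k] W)
    (hα₁O : ∀ w, q (α₁ w) = q w) (hα₂O : ∀ w, q (α₂ w) = q w)
    (hα₁2 : α₁ * α₁ = 1) (hα₁1 : α₁ ≠ 1)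
    (hα₂2 : α₂ * α₂ = 1) (hα₂1 : α₂ ≠ 1)
    (ρ₁ ρ₂ : R ≃ₗ[k] R) (τ₁ τ₂ : W₁ ≃ₗ[k] W₁) (Y₁ Y₂ : W₁ →ₗ[k] R)
    (hρ₁O : ∀ g : R, q ((ρ₁ g : W)) = q (g : W))
    (hρ₂O : ∀ g : R, q ((ρ₂ g : W)) = q (g : W))
    (hτ₁B : ∀ w w' : W₁, B ((τ₁ w : W)) ((τ₁ w' : W)) = B (w : W) (w' : W))
    (hτ₂B : ∀ w w' : W₁, B ((τ₂ w : W)) ((τ₂ w' : W)) = B (w : W) (w' : W))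
    (hα₁blk : ∀ (g : R) (w : W₁),
      α₁ ((g : W) + (w : W)) = (ρ₁ g : W) + (Y₁ w : W) + (τ₁ w : W))
    (hα₂blk : ∀ (g : R) (w : W₁),
      α₂ ((g : W) + (w : W)) = (ρ₂ g : W) + (Y₂ w : W) + (τ₂ w : W)) :
    (∃ φ : W ≃ₗ[k] W, (∀ w, q (φ w) = q w) ∧ φ * α₁ * φ⁻¹ = α₂) ↔
      ∃ (ψ : R ≃ₗ[k] R) (μ : W₁ ≃ₗ[k] W₁) (Z : W₁ →ₗ[k] R),
        (∀ g : R, q ((ψ g : W)) = q (g : W)) ∧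
        (∀ w w' : W₁, B ((μ w : W)) ((μ w' : W)) = B (w : W) (w' : W)) ∧
        (∀ w : W₁, q (w : W) = q ((μ w : W)) + q ((Z w : W))) ∧
        (∀ g : R, ψ (ρ₁ (ψ.symm g)) = ρ₂ g) ∧
        (∀ w : W₁, μ (τ₁ (μ.symm w)) = τ₂ w) ∧
        (∀ w : W₁,
          ψ (ρ₁ (Z (μ.symm w)) + Z (τ₁ (μ.symm w)) + Y₁ (μ.symm w)) = Y₂ w) := by
  obtain ⟨Q, rfl, rfl⟩ := exists_quadraticForm_coe_eq_of_charTwo hq hB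
  obtain rfl : R = Q.polarBilin.ker :=
    Submodule.ext fun g => (hR g).trans (LinearMap.ext_iff (g := 0)).symm
  have conj_eq_iff (φ : W ≃ₗ[k] W) :
      φ * α₁ * φ⁻¹ = α₂ ↔ φ.conj (α₁ : Module.End k W) = α₂ := LinearEquiv.toLinearMap_inj.symm
  have h₁ : HasTriangularBlocks (α₁ : Module.End k W) ρ₁ Y₁ τ₁ := hα₁blk
  have h₂ : HasTriangularBlocks (α₂ : Module.End k W) ρ₂ Y₂ τ₂ := hα₂blk
  have sub_eq_add (g g' : Q.polarBilin.ker) : g - g' = g' + g := by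
    rw [sub_eq_add_neg, ← neg_one_smul k, CharTwo.neg_eq, one_smul, add_comm]
  simp_rw [conj_eq_iff, stmt_19_general hcompl h₁ h₂]
  simp_rw [LinearMap.ext_iff, LinearMap.comp_apply, LinearMap.add_apply, LinearMap.sub_apply,
    sub_eq_add]
  rfl
end
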